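/- Let Ω ⊂ ℂ be a C¹ K-quasidisc, let φ : 𝔻 → Ω be a conformal mapping, and let 2 < α satisfy α(K² − 1) < 2K². Then for every test function f on Ω, ∬_Ω |f − f_Ω|² dxdy ≤ (4/π^{2/α}) · ((2α−2)/(α−2))^{(2α−2)/α} · (∬_𝔻 |φ′(z)|^α dxdy)^{2/α} · ∬_Ω |∇f|² dxdy. (This is the Rayleigh-quotient form of the bound 1/μ₁(Ω) ≤ (4/π^{2/α})((2α−2)/(α−2))^{(2α−2)/α} Q(α,Ω)^{2/α} for the first nontrivial Neumann eigenvalue, where Q(α,Ω) = ∬_𝔻 |φ′(z)|^α dxdy is the hyperbolic α-dilatation of Ω.) -/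

import Mathlib

open MeasureTheory Metric Real
open scoped ENNReal NNReal

/-- A `C¹` `K`-quasiconformal homeomorphism of `ℂ` onto itself: a `C¹`
bijection of the plane with everywhere positive Jacobian determinant satisfying
`‖Dφ(z)‖² ≤ K·J(z,φ)` everywhere. -/
def IsC1QCPlane (K : ℝ) (φ : ℂ → ℂ) : Prop :=
  ContDiff ℝ 1 φ ∧ Function.Bijective φ ∧
  ∀ z : ℂ, 0 < (fderiv ℝ φ z).det ∧ ‖fderiv ℝ φ z‖ ^ 2 ≤ K * (fderiv ℝ φ z).det

/-!
On the disc, integration along segments bounds `|u - u_𝔻|`, for `u = f ∘ φ`, by a Riesz potential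
of `|∇u|`; a Schur test against the weight `|φ'|²`, whose kernel integrals are estimated by Hölder's
inequality and symmetric rearrangement, gives a weighted Poincaré inequality with constant
governed by `∫ |φ'|^α`. Conformal invariance of the Dirichlet integral transfers it to `Ω`.

The dilatation is finite for every `α`: near each boundary point a `C¹` domain contains a cone of
opening `γπ` for every `γ < 1`, and so does its complement. Comparing the inverse of `φ` with a
sector map by Schwarz–Pick gives `dist(φ z, ∂Ω) ≤ D (1 - |z|)^γ`, and a segment in the complement
gives the Koebe-type bound `|φ' z| (1 - |z|) ≲ dist(φ z, ∂Ω)`, so `|φ' z| ≤ C (1 - |z|)^(γ - 1)`.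
-/

section Averages

variable {X F : Type*} [MeasurableSpace X] {μ : Measure X} [NormedAddCommGroup F] [NormedSpace ℝ F]

theorem enorm_sub_average_le_laverage [CompleteSpace F] [IsFiniteMeasure μ] [NeZero μ] {f : X → F}
    (hf : AEStronglyMeasurable f μ) (a : F) :
    ‖a - ⨍ x, f x ∂μ‖ₑ ≤ ⨍⁻ x, ‖a - f x‖ₑ ∂μ := by
  by_cases hfin : Integrable f μ
  · have haverage : a - ⨍ x, f x ∂μ = ⨍ x, (a - f x) ∂μ := by
      simp only [average_eq]
      rw [integral_sub (integrable_const a) hfin, integral_const, smul_sub,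
        inv_smul_smul₀ (by simp [measureReal_ne_zero_iff, NeZero.ne])]
    rw [haverage]
    exact enorm_integral_le_lintegral_enorm _
  · suffices ⨍⁻ x, ‖a - f x‖ₑ ∂μ = ∞ from this ▸ le_top
    have htop : ∫⁻ x, ‖a - f x‖ₑ ∂μ = ∞ := by
      contrapose! hfin
      have hdiff : Integrable (fun x ↦ a - f x) μ :=
        ⟨aestronglyMeasurable_const.sub hf, hfin.lt_top⟩
      have hdouble : Integrable (fun x ↦ a - (a - f x)) μ := (integrable_const a).sub hdiff
      simpa only [sub_sub_cancel] using hdouble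
    rw [laverage_eq, htop, ENNReal.top_div_of_ne_top (measure_ne_top μ _)]

theorem integral_sq_sub_average_le [IsFiniteMeasure μ] {f : X → ℝ} (hf : MemLp f 2 μ) (c : ℝ) :
    ∫ x, (f x - ⨍ y, f y ∂μ) ^ 2 ∂μ ≤ ∫ x, (f x - c) ^ 2 ∂μ := by
  set m := ⨍ y, f y ∂μ
  have hcentered : Integrable (fun x ↦ f x - m) μ :=
    (hf.integrable one_le_two).sub (integrable_const m)
  have hsq : Integrable (fun x ↦ (f x - m) ^ 2) μ := (hf.sub (memLp_const m)).integrable_sq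
  calc ∫ x, (f x - m) ^ 2 ∂μ
      = ∫ x, ((f x - m) ^ 2 + 2 * (m - c) * (f x - m)) ∂μ := by
        rw [integral_add hsq (hcentered.const_mul _), integral_const_mul, integral_sub_average,
          mul_zero, add_zero]
    _ ≤ ∫ x, (f x - c) ^ 2 ∂μ :=
        integral_mono (hsq.add (hcentered.const_mul _)) (hf.sub (memLp_const c)).integrable_sq
          fun x ↦ by linarith [sq_nonneg (m - c)]

theorem memLp_two_and_integral_sq_sub_average_le [IsFiniteMeasure μ] {f : X → ℝ}
    (hf : AEStronglyMeasurable f μ) {c B : ℝ} (hB : 0 ≤ B)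
    (h : ∫⁻ x, ‖f x - c‖ₑ ^ 2 ∂μ ≤ ENNReal.ofReal B) :
    MemLp f 2 μ ∧ ∫ x, (f x - ⨍ y, f y ∂μ) ^ 2 ∂μ ≤ B := by
  have hmeas : AEStronglyMeasurable (fun x ↦ f x - c) μ := hf.sub aestronglyMeasurable_const
  have henorm (x : X) : ‖f x - c‖ₑ ^ 2 = ENNReal.ofReal ((f x - c) ^ 2) := by
    rw [← sq_abs, ENNReal.ofReal_pow (abs_nonneg _), ← norm_eq_abs, ofReal_norm]
  simp only [henorm] at h
  have hint : Integrable (fun x ↦ (f x - c) ^ 2) μ :=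
    (lintegral_ofReal_ne_top_iff_integrable (hmeas.pow 2)
      (ae_of_all _ fun x ↦ sq_nonneg _)).1 (ne_top_of_le_ne_top ENNReal.ofReal_ne_top h)
  have hmem : MemLp f 2 μ := by
    have hadd := ((memLp_two_iff_integrable_sq hmeas).2 hint).add (memLp_const c)
    simpa only [Pi.add_def, sub_add_cancel] using hadd
  refine ⟨hmem, (integral_sq_sub_average_le hmem c).trans ?_⟩
  rwa [← ENNReal.ofReal_le_ofReal_iff hB, ofReal_integral_eq_lintegral_ofReal hint
    (ae_of_all _ fun x ↦ sq_nonneg _)]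

end Averages

section Kernels

variable {X Y : Type*} [MeasurableSpace X] [MeasurableSpace Y] {μ : Measure X} {ν : Measure Y}

theorem sq_lintegral_mul_le_lintegral_rpow_mul {s : ℝ} (hs₀ : 0 ≤ s) (hs₂ : s ≤ 2)
    {g k : Y → ℝ≥0∞} (hg : AEMeasurable g ν) (hk : AEMeasurable k ν) :
    (∫⁻ y, g y * k y ∂ν) ^ 2 ≤ (∫⁻ y, k y ^ s ∂ν) * ∫⁻ y, g y ^ 2 * k y ^ (2 - s) ∂ν := by
  have hsplit (y : Y) : g y * k y = k y ^ (s / 2) * (g y * k y ^ (1 - s / 2)) := by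
    rw [mul_left_comm, ← ENNReal.rpow_add_of_nonneg _ _ (by linarith) (by linarith),
      add_sub_cancel, ENNReal.rpow_one]
  have hcauchy := ENNReal.lintegral_mul_le_Lp_mul_Lq ν Real.HolderConjugate.two_two
    (hk.pow_const (s / 2)) (hg.mul (hk.pow_const (1 - s / 2)))
  simp only [Pi.mul_apply, ← hsplit, ENNReal.rpow_two, mul_pow] at hcauchy
  have hhalf (t : ℝ) (y : Y) : (k y ^ t) ^ 2 = k y ^ (2 * t) := by
    rw [← ENNReal.rpow_two, ← ENNReal.rpow_mul, mul_comm]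
  have hroot (a : ℝ≥0∞) : (a ^ (1 / 2 : ℝ)) ^ 2 = a := by
    rw [← ENNReal.rpow_two, ← ENNReal.rpow_mul]
    norm_num
  have hsquare := pow_le_pow_left' hcauchy 2
  rw [mul_pow, hroot, hroot] at hsquare
  simpa only [hhalf, mul_div_cancel₀ s (two_ne_zero' ℝ), mul_sub, mul_one] using hsquare

theorem lintegral_sq_mul_rpow_le {α : ℝ} (hα : 2 < α) {w k : X → ℝ≥0∞}
    (hw : AEMeasurable w μ) (hk : AEMeasurable k μ) :
    ∫⁻ x, w x ^ 2 * k x ^ (2 - α / (α - 1)) ∂μ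
      ≤ (∫⁻ x, w x ^ α ∂μ) ^ (2 / α) * (∫⁻ x, k x ^ (α / (α - 1)) ∂μ) ^ ((α - 2) / α) := by
  have hα₂ : α - 2 ≠ 0 := by linarith
  have hα₁ : α - 1 ≠ 0 := by linarith
  have hα₀ : α ≠ 0 := by linarith
  have hconj : (α / 2).HolderConjugate (α / (α - 2)) :=
    Real.holderConjugate_iff.2 ⟨by linarith, by field_simp; ring⟩
  have hexp : (2 - α / (α - 1)) * (α / (α - 2)) = α / (α - 1) := by field_simp; ring
  have hholder := ENNReal.lintegral_mul_le_Lp_mul_Lq μ hconj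
    (hw.pow_const 2) (hk.pow_const (2 - α / (α - 1)))
  simpa only [Pi.mul_apply, ← ENNReal.rpow_two, ← ENNReal.rpow_mul, one_div_div, hexp,
    mul_div_cancel₀ α (two_ne_zero' ℝ)] using hholder

-- Schur's test: Cauchy-Schwarz against `k ^ s` in `y`, then Hölder with exponent `α / 2` in `x`,
-- where `s = α / (α - 1)` is the exponent that makes both steps produce the same power of `k`.
theorem lintegral_sq_mul_sq_lintegral_kernel_le [SFinite μ] [SFinite ν] {α : ℝ} (hα : 2 < α)
    {k : X → Y → ℝ≥0∞} (hk : Measurable (Function.uncurry k)) {A B : ℝ≥0∞}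
    (hA : ∀ x, ∫⁻ y, k x y ^ (α / (α - 1)) ∂ν ≤ A) (hB : ∀ y, ∫⁻ x, k x y ^ (α / (α - 1)) ∂μ ≤ B)
    {w : X → ℝ≥0∞} (hw : Measurable w) {g : Y → ℝ≥0∞} (hg : Measurable g) :
    ∫⁻ x, w x ^ 2 * (∫⁻ y, g y * k x y ∂ν) ^ 2 ∂μ
      ≤ A * B ^ ((α - 2) / α) * (∫⁻ x, w x ^ α ∂μ) ^ (2 / α) * ∫⁻ y, g y ^ 2 ∂ν := by
  set s := α / (α - 1) with hs
  have hs₀ : 0 ≤ s := div_nonneg (by linarith) (by linarith)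
  have hs₂ : s ≤ 2 := by rw [hs, div_le_iff₀] <;> linarith
  have hkx (x : X) : Measurable (k x) := hk.of_uncurry_left
  have hky (y : Y) : Measurable fun x ↦ k x y := hk.of_uncurry_right
  have hkernel : Measurable fun p : X × Y ↦ w p.1 ^ 2 * (g p.2 ^ 2 * k p.1 p.2 ^ (2 - s)) := by
    have : Measurable fun p : X × Y ↦ k p.1 p.2 := hk
    fun_prop
  calc ∫⁻ x, w x ^ 2 * (∫⁻ y, g y * k x y ∂ν) ^ 2 ∂μ
      ≤ ∫⁻ x, A * ∫⁻ y, w x ^ 2 * (g y ^ 2 * k x y ^ (2 - s)) ∂ν ∂μ := by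
        refine lintegral_mono fun x ↦ ?_
        have hmeas : Measurable fun y ↦ g y ^ 2 * k x y ^ (2 - s) := by fun_prop
        rw [lintegral_const_mul _ hmeas, mul_left_comm]
        gcongr
        exact (sq_lintegral_mul_le_lintegral_rpow_mul hs₀ hs₂ hg.aemeasurable
          (hkx x).aemeasurable).trans (by gcongr; exact hA x)
    _ = A * ∫⁻ y, ∫⁻ x, w x ^ 2 * (g y ^ 2 * k x y ^ (2 - s)) ∂μ ∂ν := by
        rw [lintegral_const_mul _ hkernel.lintegral_prod_right',
          lintegral_lintegral_swap hkernel.aemeasurable]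
    _ = A * ∫⁻ y, (∫⁻ x, w x ^ 2 * k x y ^ (2 - s) ∂μ) * g y ^ 2 ∂ν := by
        congr! 3 with y
        have hmeas : Measurable fun x ↦ w x ^ 2 * k x y ^ (2 - s) := by fun_prop
        rw [← lintegral_mul_const _ hmeas]
        congr! 2 with x
        ring
    _ ≤ A * ∫⁻ y, (∫⁻ x, w x ^ α ∂μ) ^ (2 / α) * B ^ ((α - 2) / α) * g y ^ 2 ∂ν := by
        gcongr with y
        refine (lintegral_sq_mul_rpow_le hα hw.aemeasurable (hky y).aemeasurable).trans ?_
        gcongr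
        exact hB y
    _ = A * B ^ ((α - 2) / α) * (∫⁻ x, w x ^ α ∂μ) ^ (2 / α) * ∫⁻ y, g y ^ 2 ∂ν := by
        rw [lintegral_const_mul _ (hg.pow_const 2)]
        ring

end Kernels

local notation "dim" => Module.finrank ℝ

section RieszPotential

variable {E F : Type*} [NormedAddCommGroup E] [NormedSpace ℝ E] [NormedAddCommGroup F]
  [NormedSpace ℝ F]

theorem enorm_sub_le_lintegral_enorm_fderiv_of_convex {D : Set E} (hD : Convex ℝ D) (hDo : IsOpen D)
    {u : E → F} (hu : ContDiffOn ℝ 1 u D) {x y : E} (hx : x ∈ D) (hy : y ∈ D) :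
    ‖u x - u y‖ₑ ≤ ∫⁻ t in Set.Ioc (0 : ℝ) 1, ‖fderiv ℝ u (x + t • (y - x))‖ₑ * ‖y - x‖ₑ := by
  have hmem (t : ℝ) (ht : t ∈ Set.Icc (0 : ℝ) 1) : x + t • (y - x) ∈ D :=
    hD.add_smul_sub_mem hx hy ht
  have hpath : ContDiffOn ℝ 1 (fun t : ℝ ↦ u (x + t • (y - x))) (Set.Icc 0 1) :=
    hu.comp (by fun_prop) hmem
  have hftc := enorm_sub_le_lintegral_deriv_of_contDiffOn_Icc hpath zero_le_one
  simp only [one_smul, zero_smul, add_zero, add_sub_cancel] at hftc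
  rw [enorm_sub_rev, restrict_Ioc_eq_restrict_Icc]
  refine hftc.trans (setLIntegral_mono' measurableSet_Icc fun t ht ↦ ?_)
  have hline : HasDerivAt (fun t : ℝ ↦ x + t • (y - x)) (y - x) t := by
    simpa using ((hasDerivAt_id t).smul_const (y - x)).const_add x
  have hu_diff : DifferentiableAt ℝ u (x + t • (y - x)) :=
    (hu.differentiableOn one_ne_zero).differentiableAt (hDo.mem_nhds (hmem t ht))
  have hderiv : deriv (fun t : ℝ ↦ u (x + t • (y - x))) t =
      fderiv ℝ u (x + t • (y - x)) (y - x) := (hu_diff.hasFDerivAt.comp_hasDerivAt t hline).deriv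
  rw [hderiv]
  exact ContinuousLinearMap.le_opENorm _ _

theorem setLIntegral_Ioi_inv_pow {n : ℕ} (hn : n ≠ 0) {ρ : ℝ} (hρ : 0 < ρ) :
    ∫⁻ t in Set.Ioi ρ, ENNReal.ofReal (t ^ (n + 1))⁻¹ = ENNReal.ofReal (n * ρ ^ n)⁻¹ := by
  have hn' : (0 : ℝ) < n := by positivity
  have hexp : (-(n + 1) : ℝ) < -1 := by linarith
  have hrpow {t : ℝ} (ht : 0 < t) (m : ℕ) : (t ^ m)⁻¹ = t ^ (-m : ℝ) := by
    rw [rpow_neg ht.le, rpow_natCast]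
  have hcongr : ∀ t ∈ Set.Ioi ρ,
      ENNReal.ofReal (t ^ (n + 1))⁻¹ = ENNReal.ofReal (t ^ (-(n + 1) : ℝ)) := fun t ht ↦ by
    rw [hrpow (hρ.trans ht)]
    push_cast
    rfl
  rw [setLIntegral_congr_fun measurableSet_Ioi hcongr, ← ofReal_integral_eq_lintegral_ofReal
    (integrableOn_Ioi_rpow_of_lt hexp hρ), integral_Ioi_rpow_of_lt hexp hρ, mul_inv, hrpow hρ]
  · congr 1
    rw [neg_add, neg_add_cancel_right, neg_div_neg_eq]
    exact div_eq_inv_mul _ _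
  · filter_upwards [ae_restrict_mem measurableSet_Ioi] with t ht
    exact rpow_nonneg (hρ.trans ht).le _

theorem lintegral_inv_pow_mul_indicator_ball_le [FiniteDimensional ℝ E] {R : ℝ} (hR : 0 < R)
    (x y : E) (c : ℝ≥0∞) :
    ∫⁻ t in Set.Ioc (0 : ℝ) 1, ENNReal.ofReal (t ^ (dim E + 1))⁻¹ *
        (ball x (t * R)).indicator (fun y ↦ c * ‖y - x‖ₑ) y
      ≤ ENNReal.ofReal (R ^ dim E / dim E) * (c * ‖x - y‖ₑ ^ (1 - dim E : ℝ)) := by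
  rcases eq_or_ne y x with rfl | hne
  · simp [Set.indicator]
  have hpos : 0 < ‖y - x‖ := norm_pos_iff.2 (sub_ne_zero.2 hne)
  have : Nontrivial E := ⟨y, x, hne⟩
  have hdim : dim E ≠ 0 := Module.finrank_pos.ne'
  calc ∫⁻ t in Set.Ioc (0 : ℝ) 1, ENNReal.ofReal (t ^ (dim E + 1))⁻¹ *
        (ball x (t * R)).indicator (fun y ↦ c * ‖y - x‖ₑ) y
      ≤ ∫⁻ t, (Set.Ioi (‖y - x‖ / R)).indicator (fun t ↦ ENNReal.ofReal (t ^ (dim E + 1))⁻¹) t *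
          (c * ‖y - x‖ₑ) := by
        refine (setLIntegral_le_lintegral _ _).trans (lintegral_mono fun t ↦ ?_)
        by_cases hball : y ∈ ball x (t * R)
        · have ht : t ∈ Set.Ioi (‖y - x‖ / R) := by
            rwa [Set.mem_Ioi, div_lt_iff₀ hR, ← dist_eq_norm]
          rw [Set.indicator_of_mem hball, Set.indicator_of_mem ht]
        · simp [Set.indicator_of_notMem hball]
    _ = ENNReal.ofReal (dim E * (‖y - x‖ / R) ^ dim E)⁻¹ * (c * ‖y - x‖ₑ) := by
        rw [lintegral_mul_const _ (Measurable.indicator (by fun_prop) measurableSet_Ioi),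
          lintegral_indicator measurableSet_Ioi, setLIntegral_Ioi_inv_pow hdim (by positivity)]
    _ = ENNReal.ofReal (R ^ dim E / dim E) * (c * ‖x - y‖ₑ ^ (1 - dim E : ℝ)) := by
        rw [mul_left_comm, mul_left_comm (ENNReal.ofReal _), enorm_sub_rev x y, ← ofReal_norm,
          ENNReal.ofReal_rpow_of_pos hpos, ← ENNReal.ofReal_mul (by positivity),
          ← ENNReal.ofReal_mul (by positivity), rpow_sub hpos, rpow_one, rpow_natCast]
        congr 2
        rw [div_pow]
        field_simp

variable [MeasurableSpace E] [BorelSpace E] [FiniteDimensional ℝ E] (μ : Measure E)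
  [μ.IsAddHaarMeasure]

theorem lintegral_comp_homothety (G : E → ℝ≥0∞) (x : E) {t : ℝ} (ht : t ≠ 0) :
    ∫⁻ y, G (x + t • (y - x)) ∂μ = ENNReal.ofReal |(t ^ dim E)⁻¹| * ∫⁻ y, G y ∂μ := by
  rw [lintegral_sub_right_eq_self (fun y ↦ G (x + t • y)) x,
    ← lintegral_add_left_eq_self G x, ← smul_eq_mul, ← lintegral_smul_measure,
    ← Measure.map_addHaar_smul μ ht]
  exact (lintegral_map_equiv (fun y ↦ G (x + y))
    (Homeomorph.smulOfNeZero t ht).toMeasurableEquiv).symm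

theorem setLIntegral_comp_homothety_le_of_convex {D : Set E} (hD : Convex ℝ D)
    (hDm : MeasurableSet D) {R : ℝ} {x : E} (hx : x ∈ D) (hR : D ⊆ ball x R) (g : E → ℝ≥0∞)
    {t : ℝ} (ht : t ∈ Set.Ioc (0 : ℝ) 1) :
    ∫⁻ y in D, g (x + t • (y - x)) * ‖y - x‖ₑ ∂μ
      ≤ ENNReal.ofReal (t ^ (dim E + 1))⁻¹ *
        ∫⁻ y in D, (ball x (t * R)).indicator (fun y ↦ g y * ‖y - x‖ₑ) y ∂μ := by
  have ht₀ : 0 < t := ht.1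
  set G : E → ℝ≥0∞ := D.indicator ((ball x (t * R)).indicator fun y ↦ g y * ‖y - x‖ₑ)
  have hpoint : ∀ y ∈ D, g (x + t • (y - x)) * ‖y - x‖ₑ
      = ENNReal.ofReal t⁻¹ * G (x + t • (y - x)) := fun y hy ↦ by
    have hmem : x + t • (y - x) ∈ D := hD.add_smul_sub_mem hx hy ⟨ht₀.le, ht.2⟩
    have hball : x + t • (y - x) ∈ ball x (t * R) := by
      rw [mem_ball, dist_eq_norm, add_sub_cancel_left, norm_smul, norm_of_nonneg ht₀.le,
        ← dist_eq_norm]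
      exact mul_lt_mul_of_pos_left (hR hy) ht₀
    simp only [G, Set.indicator_of_mem hmem, Set.indicator_of_mem hball, add_sub_cancel_left]
    rw [enorm_smul, Real.enorm_of_nonneg ht₀.le, mul_left_comm,
      ← mul_assoc (ENNReal.ofReal t⁻¹), ← ENNReal.ofReal_mul (by positivity),
      inv_mul_cancel₀ ht₀.ne', ENNReal.ofReal_one, one_mul]
  calc ∫⁻ y in D, g (x + t • (y - x)) * ‖y - x‖ₑ ∂μ
      ≤ ∫⁻ y, ENNReal.ofReal t⁻¹ * G (x + t • (y - x)) ∂μ := by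
        rw [setLIntegral_congr_fun hDm hpoint]
        exact setLIntegral_le_lintegral _ _
    _ = ENNReal.ofReal (t ^ (dim E + 1))⁻¹ * ∫⁻ y, G y ∂μ := by
        rw [lintegral_const_mul' _ _ ENNReal.ofReal_ne_top, lintegral_comp_homothety μ G x ht₀.ne',
          ← mul_assoc, ← ENNReal.ofReal_mul (by positivity), abs_of_pos (by positivity), pow_succ',
          mul_inv]
    _ = _ := by rw [lintegral_indicator hDm]

theorem lintegral_enorm_sub_le_lintegral_enorm_fderiv_of_convex [CompleteSpace F] {D : Set E}
    (hD : Convex ℝ D) (hDo : IsOpen D) {R : ℝ} {x : E} (hx : x ∈ D) (hR : D ⊆ ball x R) {u : E → F}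
    (hu : ContDiffOn ℝ 1 u D) :
    ∫⁻ y in D, ‖u x - u y‖ₑ ∂μ ≤ ENNReal.ofReal (R ^ dim E / dim E) *
      ∫⁻ y in D, ‖fderiv ℝ u y‖ₑ * ‖x - y‖ₑ ^ (1 - dim E : ℝ) ∂μ := by
  have hgrad : Measurable fun y ↦ ‖fderiv ℝ u y‖ₑ := (measurable_fderiv ℝ u).enorm
  have hsegment : Measurable fun p : E × ℝ ↦
      ‖fderiv ℝ u (x + p.2 • (p.1 - x))‖ₑ * ‖p.1 - x‖ₑ :=
    (hgrad.comp (by fun_prop : Measurable fun p : E × ℝ ↦ x + p.2 • (p.1 - x))).mul (by fun_prop)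
  have hscaled : Measurable fun p : ℝ × E ↦ ENNReal.ofReal (p.1 ^ (dim E + 1))⁻¹ *
      (ball x (p.1 * R)).indicator (fun y ↦ ‖fderiv ℝ u y‖ₑ * ‖y - x‖ₑ) p.2 := by
    refine Measurable.mul (by fun_prop) ?_
    exact ((hgrad.comp measurable_snd).mul (by fun_prop)).indicator
      (measurableSet_lt (by fun_prop : Measurable fun p : ℝ × E ↦ dist p.2 x) (by fun_prop))
  calc ∫⁻ y in D, ‖u x - u y‖ₑ ∂μ
      ≤ ∫⁻ y in D, (∫⁻ t in Set.Ioc (0 : ℝ) 1,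
          ‖fderiv ℝ u (x + t • (y - x))‖ₑ * ‖y - x‖ₑ) ∂μ :=
        setLIntegral_mono' hDo.measurableSet fun y hy ↦
          enorm_sub_le_lintegral_enorm_fderiv_of_convex hD hDo hu hx hy
    _ = ∫⁻ t in Set.Ioc (0 : ℝ) 1, ∫⁻ y in D,
          ‖fderiv ℝ u (x + t • (y - x))‖ₑ * ‖y - x‖ₑ ∂μ :=
        lintegral_lintegral_swap hsegment.aemeasurable
    _ ≤ ∫⁻ t in Set.Ioc (0 : ℝ) 1, ∫⁻ y in D, ENNReal.ofReal (t ^ (dim E + 1))⁻¹ *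
          (ball x (t * R)).indicator (fun y ↦ ‖fderiv ℝ u y‖ₑ * ‖y - x‖ₑ) y ∂μ := by
        refine setLIntegral_mono' measurableSet_Ioc fun t ht ↦ ?_
        rw [lintegral_const_mul' _ _ ENNReal.ofReal_ne_top]
        exact setLIntegral_comp_homothety_le_of_convex μ hD hDo.measurableSet hx hR _ ht
    _ = ∫⁻ y in D, (∫⁻ t in Set.Ioc (0 : ℝ) 1, ENNReal.ofReal (t ^ (dim E + 1))⁻¹ *
          (ball x (t * R)).indicator (fun y ↦ ‖fderiv ℝ u y‖ₑ * ‖y - x‖ₑ) y) ∂μ :=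
        lintegral_lintegral_swap hscaled.aemeasurable
    _ ≤ ∫⁻ y in D, ENNReal.ofReal (R ^ dim E / dim E) *
          (‖fderiv ℝ u y‖ₑ * ‖x - y‖ₑ ^ (1 - dim E : ℝ)) ∂μ := by
        refine lintegral_mono fun y ↦ ?_
        exact lintegral_inv_pow_mul_indicator_ball_le (pos_of_mem_ball (hR hx)) x y _
    _ = _ := lintegral_const_mul' _ _ ENNReal.ofReal_ne_top

end RieszPotential

section Rearrangement

theorem setLIntegral_antitone_dist_le_ball {X : Type*} [PseudoMetricSpace X] [MeasurableSpace X]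
    [OpensMeasurableSpace X] {μ : Measure X} {h : ℝ → ℝ≥0∞} (hh : Antitone h) {D : Set X}
    (hDm : MeasurableSet D) {x : X} {R : ℝ} (hD : μ D ≤ μ (ball x R)) (hfin : μ D ≠ ∞) :
    ∫⁻ y in D, h (dist y x) ∂μ ≤ ∫⁻ y in ball x R, h (dist y x) ∂μ := by
  have hdiff : μ (D \ ball x R) ≤ μ (ball x R \ D) := by
    rw [← measure_inter_add_sdiff D measurableSet_ball, ← measure_inter_add_sdiff (ball x R) hDm,
      Set.inter_comm] at hD
    exact (ENNReal.add_le_add_iff_left (measure_ne_top_of_subset Set.inter_subset_right hfin)).1 hD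
  rw [← lintegral_inter_add_sdiff _ D (measurableSet_ball (x := x) (ε := R)),
    ← lintegral_inter_add_sdiff _ (ball x R) hDm, Set.inter_comm]
  gcongr 1
  calc ∫⁻ y in D \ ball x R, h (dist y x) ∂μ
      ≤ ∫⁻ _ in D \ ball x R, h R ∂μ :=
        setLIntegral_mono' (hDm.diff measurableSet_ball) fun y hy ↦ hh (not_lt.1 hy.2)
    _ ≤ ∫⁻ _ in ball x R \ D, h R ∂μ := by
        rw [setLIntegral_const, setLIntegral_const]
        gcongr
    _ ≤ ∫⁻ y in ball x R \ D, h (dist y x) ∂μ :=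
        setLIntegral_mono' (measurableSet_ball.diff hDm) fun y hy ↦ hh (mem_ball.1 hy.1).le

variable {E : Type*} [NormedAddCommGroup E] [NormedSpace ℝ E] [MeasurableSpace E] [BorelSpace E]
  [FiniteDimensional ℝ E] (μ : Measure E) [μ.IsAddHaarMeasure]

theorem lintegral_fun_norm_addHaar [Nontrivial E] {f : ℝ → ℝ≥0∞} (hf : Measurable f) :
    ∫⁻ x, f ‖x‖ ∂μ =
      dim E * μ (ball 0 1) * ∫⁻ r in Set.Ioi 0, ENNReal.ofReal (r ^ (dim E - 1)) * f r :=
  calc ∫⁻ x, f ‖x‖ ∂μ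
      = ∫⁻ x : ({0}ᶜ : Set E), f ‖x.1‖ ∂(μ.comap (↑)) := by
        rw [lintegral_subtype_comap (measurableSet_singleton _).compl fun x ↦ f ‖x‖,
          restrict_compl_singleton]
    _ = ∫⁻ x, f x.2 ∂μ.toSphere.prod (.volumeIoiPow (dim E - 1)) := by
        simpa using μ.measurePreserving_homeomorphUnitSphereProd.lintegral_comp_emb
          (Homeomorph.measurableEmbedding _) fun x ↦ f x.2
    _ = μ.toSphere Set.univ * ∫⁻ r : Set.Ioi (0 : ℝ), f r ∂.volumeIoiPow (dim E - 1) := by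
        rw [lintegral_prod _ (by fun_prop)]
        simp only [lintegral_const, mul_comm]
    _ = dim E * μ (ball 0 1) * ∫⁻ r in Set.Ioi 0, ENNReal.ofReal (r ^ (dim E - 1)) * f r := by
        rw [Measure.toSphere_apply_univ, Measure.volumeIoiPow,
          lintegral_withDensity_eq_lintegral_mul _ (by fun_prop) (by fun_prop),
          ← lintegral_subtype_comap measurableSet_Ioi]
        rfl

theorem setLIntegral_ball_fun_norm_addHaar [Nontrivial E] {f : ℝ → ℝ≥0∞} (hf : Measurable f)
    (R : ℝ) :
    ∫⁻ x in ball 0 R, f ‖x‖ ∂μ =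
      dim E * μ (ball 0 1) * ∫⁻ r in Set.Ioo 0 R, ENNReal.ofReal (r ^ (dim E - 1)) * f r := by
  have hball : (ball (0 : E) R).indicator (fun x ↦ f ‖x‖) =
      fun x ↦ (Set.Iio R).indicator f ‖x‖ := by
    ext x
    simp [Set.indicator]
  rw [← lintegral_indicator measurableSet_ball, hball,
    lintegral_fun_norm_addHaar μ (hf.indicator measurableSet_Iio), ← Set.Ioi_inter_Iio,
    Set.inter_comm, ← Measure.restrict_restrict measurableSet_Iio,
    ← lintegral_indicator measurableSet_Iio]
  simp only [Set.indicator_mul_right]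

theorem setLIntegral_Ioo_rpow {p : ℝ} (hp : -1 < p) :
    ∫⁻ r in Set.Ioo (0 : ℝ) 1, ENNReal.ofReal (r ^ p) = ENNReal.ofReal (p + 1)⁻¹ := by
  have hint := (intervalIntegrable_iff_integrableOn_Ioc_of_le zero_le_one).1
    (intervalIntegral.intervalIntegrable_rpow' hp)
  rw [Measure.restrict_congr_set Ioo_ae_eq_Ioc, ← ofReal_integral_eq_lintegral_ofReal hint,
    ← intervalIntegral.integral_of_le zero_le_one, integral_rpow (Or.inl hp), one_rpow,
    zero_rpow (by linarith), sub_zero, one_div]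
  filter_upwards [ae_restrict_mem measurableSet_Ioc] with r hr
  exact rpow_nonneg hr.1.le p

theorem setLIntegral_unitBall_enorm_rpow_neg [Nontrivial E] {s : ℝ} (hs : s < dim E) :
    ∫⁻ y in ball (0 : E) 1, ‖y‖ₑ ^ (-s) ∂μ
      = dim E * μ (ball 0 1) * ENNReal.ofReal (dim E - s)⁻¹ := by
  have hdim : 0 < dim E := Module.finrank_pos
  simp only [← ofReal_norm]
  rw [setLIntegral_ball_fun_norm_addHaar μ (f := fun r ↦ ENNReal.ofReal r ^ (-s)) (by fun_prop)]
  congr 1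
  rw [← sub_add_cancel (dim E - s : ℝ) 1, ← setLIntegral_Ioo_rpow (by linarith)]
  refine setLIntegral_congr_fun measurableSet_Ioo fun r hr ↦ ?_
  rw [ENNReal.ofReal_rpow_of_pos hr.1, ← ENNReal.ofReal_mul (by have := hr.1; positivity),
    ← rpow_natCast, ← rpow_add hr.1, Nat.cast_pred hdim]
  ring_nf

theorem setLIntegral_enorm_sub_rpow_neg_le [Nontrivial E] {s : ℝ} (hs₀ : 0 ≤ s) (hs : s < dim E)
    {D : Set E} (hDm : MeasurableSet D) (hD : μ D ≤ μ (ball 0 1)) (x : E) :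
    ∫⁻ y in D, ‖x - y‖ₑ ^ (-s) ∂μ ≤ dim E * μ (ball 0 1) * ENNReal.ofReal (dim E - s)⁻¹ := by
  have hanti : Antitone fun r ↦ ENNReal.ofReal r ^ (-s) := fun a b hab ↦ by
    simp only [ENNReal.rpow_neg]
    gcongr
  have hball : μ (ball x 1) = μ (ball 0 1) := Measure.addHaar_ball_center μ x 1
  have hcompare := setLIntegral_antitone_dist_le_ball hanti hDm (x := x) (hball ▸ hD)
    (ne_top_of_le_ne_top measure_ball_lt_top.ne hD)
  simp only [dist_eq_norm, ofReal_norm] at hcompare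
  simp only [enorm_sub_rev x]
  refine hcompare.trans_eq ?_
  rw [← setLIntegral_unitBall_enorm_rpow_neg μ hs, ← lintegral_indicator measurableSet_ball,
    ← lintegral_indicator measurableSet_ball,
    ← lintegral_sub_right_eq_self ((ball 0 1).indicator fun y ↦ ‖y‖ₑ ^ (-s)) x]
  congr! 2 with y
  simp [Set.indicator, dist_eq_norm]

theorem setLIntegral_enorm_sub_rpow_rpow_conjExponent_le [Nontrivial E] {α : ℝ} (hα : 1 < α)
    (hdim : dim E < α) {D : Set E} (hDm : MeasurableSet D) (hD : μ D ≤ μ (ball 0 1)) (x : E) :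
    ∫⁻ y in D, (‖x - y‖ₑ ^ (1 - dim E : ℝ)) ^ (α / (α - 1)) ∂μ ≤
      dim E * μ (ball 0 1) * ENNReal.ofReal (dim E - (dim E - 1) * (α / (α - 1)))⁻¹ := by
  have hone : (1 : ℝ) ≤ dim E := by exact_mod_cast (Module.finrank_pos : 0 < dim E)
  have hs : 0 ≤ (dim E - 1) * (α / (α - 1)) :=
    mul_nonneg (by linarith) (div_nonneg (by linarith) (by linarith))
  have hs_lt : (dim E - 1) * (α / (α - 1)) < dim E := by
    rw [← mul_div_assoc, div_lt_iff₀ (by linarith)]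
    linarith
  simp only [← ENNReal.rpow_mul, ← neg_sub (dim E : ℝ) 1, neg_mul]
  exact setLIntegral_enorm_sub_rpow_neg_le μ hs hs_lt hDm hD x

end Rearrangement

section WeightedPoincare

variable {E F : Type*} [NormedAddCommGroup E] [NormedSpace ℝ E] [MeasurableSpace E] [BorelSpace E]
  [FiniteDimensional ℝ E] [NormedAddCommGroup F] [NormedSpace ℝ F] [CompleteSpace F]
  (μ : Measure E) [μ.IsAddHaarMeasure]

theorem enorm_sub_average_le_riesz_of_convex {D : Set E} (hD : Convex ℝ D) (hDo : IsOpen D)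
    {R : ℝ} {x : E} (hx : x ∈ D) (hR : D ⊆ ball x R) {u : E → F} (hu : ContDiffOn ℝ 1 u D) :
    ‖u x - ⨍ y in D, u y ∂μ‖ₑ ≤ ENNReal.ofReal (R ^ dim E / dim E) / μ D *
      ∫⁻ y in D, ‖fderiv ℝ u y‖ₑ * ‖x - y‖ₑ ^ (1 - dim E : ℝ) ∂μ := by
  have : IsFiniteMeasure (μ.restrict D) :=
    isFiniteMeasure_restrict.2 (measure_ne_top_of_subset hR measure_ball_lt_top.ne)
  have : NeZero (μ.restrict D) :=
    ⟨Measure.restrict_eq_zero.not.2 (hDo.measure_pos μ ⟨x, hx⟩).ne'⟩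
  calc ‖u x - ⨍ y in D, u y ∂μ‖ₑ
      ≤ ⨍⁻ y in D, ‖u x - u y‖ₑ ∂μ :=
        enorm_sub_average_le_laverage
          (hu.continuousOn.aestronglyMeasurable hDo.measurableSet) (u x)
    _ = (∫⁻ y in D, ‖u x - u y‖ₑ ∂μ) / μ D := setLAverage_eq _ _ _
    _ ≤ _ := by
        rw [← ENNReal.mul_div_right_comm]
        gcongr
        exact lintegral_enorm_sub_le_lintegral_enorm_fderiv_of_convex μ hD hDo hx hR hu

theorem lintegral_sq_mul_sq_enorm_sub_average_le_of_convex [Nontrivial E] {α : ℝ} (hα : 2 < α)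
    (hdim : dim E < α) {D : Set E} (hD : Convex ℝ D) (hDo : IsOpen D)
    (hμD : μ D ≤ μ (ball 0 1)) {R : ℝ} (hR : ∀ x ∈ D, D ⊆ ball x R) {u : E → F}
    (hu : ContDiffOn ℝ 1 u D) {w : E → ℝ≥0∞} (hw : Measurable w) :
    ∫⁻ x in D, w x ^ 2 * ‖u x - ⨍ y in D, u y ∂μ‖ₑ ^ 2 ∂μ
      ≤ (ENNReal.ofReal (R ^ dim E / dim E) / μ D) ^ 2 *
        ((dim E * μ (ball 0 1) *
            ENNReal.ofReal (dim E - (dim E - 1) * (α / (α - 1)))⁻¹) ^ ((2 * α - 2) / α) *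
          (∫⁻ x in D, w x ^ α ∂μ) ^ (2 / α) * ∫⁻ x in D, ‖fderiv ℝ u x‖ₑ ^ 2 ∂μ) := by
  set c := ENNReal.ofReal (R ^ dim E / dim E) / μ D
  set A := dim E * μ (ball (0 : E) 1) *
    ENNReal.ofReal (dim E - (dim E - 1) * (α / (α - 1)))⁻¹
  have hkernel (x : E) : ∫⁻ y in D, (‖x - y‖ₑ ^ (1 - dim E : ℝ)) ^ (α / (α - 1)) ∂μ ≤ A :=
    setLIntegral_enorm_sub_rpow_rpow_conjExponent_le μ (one_lt_two.trans hα) hdim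
      hDo.measurableSet hμD x
  have hgrad : Measurable fun y ↦ ‖fderiv ℝ u y‖ₑ := (measurable_fderiv ℝ u).enorm
  calc ∫⁻ x in D, w x ^ 2 * ‖u x - ⨍ y in D, u y ∂μ‖ₑ ^ 2 ∂μ
      ≤ ∫⁻ x in D, c ^ 2 * (w x ^ 2 *
          (∫⁻ y in D, ‖fderiv ℝ u y‖ₑ * ‖x - y‖ₑ ^ (1 - dim E : ℝ) ∂μ) ^ 2) ∂μ := by
        refine setLIntegral_mono' hDo.measurableSet fun x hx ↦ ?_
        rw [mul_left_comm, ← mul_pow c]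
        gcongr
        exact enorm_sub_average_le_riesz_of_convex μ hD hDo hx (hR x hx) hu
    _ = c ^ 2 * ∫⁻ x in D, w x ^ 2 *
          (∫⁻ y in D, ‖fderiv ℝ u y‖ₑ * ‖x - y‖ₑ ^ (1 - dim E : ℝ) ∂μ) ^ 2 ∂μ := by
        have hpotential : Measurable fun p : E × E ↦
            ‖fderiv ℝ u p.2‖ₑ * ‖p.1 - p.2‖ₑ ^ (1 - dim E : ℝ) :=
          (hgrad.comp measurable_snd).mul (by fun_prop)
        exact lintegral_const_mul _ ((hw.pow_const 2).mul
          (hpotential.lintegral_prod_right'.pow_const 2))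
    _ ≤ c ^ 2 * (A * A ^ ((α - 2) / α) * (∫⁻ x in D, w x ^ α ∂μ) ^ (2 / α) *
          ∫⁻ x in D, ‖fderiv ℝ u x‖ₑ ^ 2 ∂μ) := by
        gcongr
        refine lintegral_sq_mul_sq_lintegral_kernel_le (k := fun x y ↦ ‖x - y‖ₑ ^ (1 - dim E : ℝ))
          hα (by fun_prop) hkernel (fun y ↦ ?_) hw hgrad
        simpa only [enorm_sub_rev] using hkernel y
    _ = _ := by
        have hexp : A ^ ((2 * α - 2) / α) = A * A ^ ((α - 2) / α) := by
          nth_rw 2 [← ENNReal.rpow_one A]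
          rw [← ENNReal.rpow_add_of_nonneg _ _ zero_le_one
            (div_nonneg (by linarith) (by linarith)), one_add_div (by linarith)]
          ring_nf
        rw [hexp]

end WeightedPoincare

section Disc

variable {F : Type*} [NormedAddCommGroup F] [NormedSpace ℝ F] [CompleteSpace F]

/-- The constant `(4 / π ^ (2 / α)) ((2α - 2) / (α - 2)) ^ ((2α - 2) / α)` of the weighted
Poincaré inequality on the unit disc whose weight is measured in `L^α`. -/
noncomputable def discPoincareConst (α : ℝ) : ℝ :=
  4 / π ^ (2 / α) * ((2 * α - 2) / (α - 2)) ^ ((2 * α - 2) / α)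

theorem discPoincareConst_pos {α : ℝ} (hα : 2 < α) : 0 < discPoincareConst α := by
  have : 0 < (2 * α - 2) / (α - 2) := div_pos (by linarith) (by linarith)
  unfold discPoincareConst
  positivity

theorem sq_two_div_pi_mul_rpow_eq_discPoincareConst {α : ℝ} (hα : 2 < α) :
    (2 / π) ^ 2 * (π * ((2 * α - 2) / (α - 2))) ^ ((2 * α - 2) / α) = discPoincareConst α := by
  have hα₀ : α ≠ 0 := by linarith
  have hratio : 0 ≤ (2 * α - 2) / (α - 2) := div_nonneg (by linarith) (by linarith)
  have hpow : π ^ ((2 * α - 2) / α) = π ^ 2 / π ^ (2 / α) := by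
    rw [← rpow_natCast, ← rpow_sub pi_pos]
    congr 1
    field_simp
    push_cast
    ring
  rw [discPoincareConst, mul_rpow pi_nonneg hratio, hpow, ← mul_assoc]
  congr 1
  field_simp
  norm_num

theorem lintegral_sq_mul_sq_enorm_sub_average_unitDisc_le {α : ℝ} (hα : 2 < α) {u : ℂ → F}
    (hu : ContDiffOn ℝ 1 u (ball 0 1)) {w : ℂ → ℝ≥0∞} (hw : Measurable w) :
    ∫⁻ z in ball 0 1, w z ^ 2 * ‖u z - ⨍ y in ball 0 1, u y‖ₑ ^ 2
      ≤ ENNReal.ofReal (discPoincareConst α) * (∫⁻ z in ball 0 1, w z ^ α) ^ (2 / α) *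
        ∫⁻ z in ball 0 1, ‖fderiv ℝ u z‖ₑ ^ 2 := by
  have hsubset (x : ℂ) (hx : x ∈ ball (0 : ℂ) 1) : ball (0 : ℂ) 1 ⊆ ball x 2 :=
    ball_subset_ball' (by linarith [mem_ball'.1 hx])
  have hvolume : volume (ball (0 : ℂ) 1) = ENNReal.ofReal π := by
    simp [Complex.volume_ball, ← NNReal.coe_real_pi, ENNReal.ofReal_coe_nnreal]
  have hbound : (2 : ℝ) * π * (2 - (2 - 1) * (α / (α - 1)))⁻¹ = π * ((2 * α - 2) / (α - 2)) := by
    have h₁ : α - 1 ≠ 0 := by linarith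
    have h₂ : α - 2 ≠ 0 := by linarith
    have h₃ : 2 - (2 - 1) * (α / (α - 1)) = (α - 2) / (α - 1) := by field_simp; ring
    rw [h₃]
    field_simp
  have hratio : 0 < (2 * α - 2) / (α - 2) := div_pos (by linarith) (by linarith)
  have hmain := lintegral_sq_mul_sq_enorm_sub_average_le_of_convex volume hα
    (by simpa using hα) (convex_ball 0 1) isOpen_ball le_rfl hsubset hu hw
  simp only [Complex.finrank_real_complex, Nat.cast_ofNat, hvolume] at hmain
  rw [← ENNReal.ofReal_div_of_pos pi_pos, ← ENNReal.ofReal_ofNat 2,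
    ← ENNReal.ofReal_mul zero_le_two, ← ENNReal.ofReal_mul (by positivity), hbound,
    ENNReal.ofReal_rpow_of_nonneg (by positivity) (div_nonneg (by linarith) (by linarith)),
    ← ENNReal.ofReal_pow (by positivity), mul_assoc, ← mul_assoc,
    ← ENNReal.ofReal_mul (by positivity), sq (2 : ℝ),
    mul_self_div_self, sq_two_div_pi_mul_rpow_eq_discPoincareConst hα, ← mul_assoc] at hmain
  exact hmain

end Disc

section ConformalChangeOfVariables

theorem lintegral_image_eq_lintegral_enorm_deriv_sq_mul {φ φ' : ℂ → ℂ} {U : Set ℂ}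
    (hU : MeasurableSet U) (hφ : ∀ z ∈ U, HasDerivWithinAt φ (φ' z) U z) (hinj : U.InjOn φ)
    (g : ℂ → ℝ≥0∞) : ∫⁻ w in φ '' U, g w = ∫⁻ z in U, ‖φ' z‖ₑ ^ 2 * g (φ z) := by
  rw [lintegral_image_eq_lintegral_abs_det_fderiv_mul volume hU
    (fun z hz ↦ (hφ z hz).hasFDerivWithinAt.restrictScalars ℝ) hinj]
  refine lintegral_congr fun z ↦ ?_
  congr 1
  simp [ContinuousLinearMap.det, LinearMap.det_restrictScalars, Algebra.norm_complex_eq,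
    Complex.normSq_eq_norm_sq]

variable {F : Type*} [NormedAddCommGroup F] [NormedSpace ℝ F]

theorem enorm_fderiv_comp_le {φ : ℂ → ℂ} {z : ℂ} (hφ : DifferentiableAt ℂ φ z) {f : ℂ → F}
    (hf : DifferentiableAt ℝ f (φ z)) :
    ‖fderiv ℝ (f ∘ φ) z‖ₑ ≤ ‖deriv φ z‖ₑ * ‖fderiv ℝ f (φ z)‖ₑ := by
  rw [fderiv_comp z hf (hφ.restrictScalars ℝ), mul_comm]
  refine (ContinuousLinearMap.opENorm_comp_le _ _).trans_eq ?_
  rw [hφ.fderiv_restrictScalars ℝ, ← ofReal_norm (fderiv ℂ φ z |>.restrictScalars ℝ),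
    ContinuousLinearMap.norm_restrictScalars, ← norm_deriv_eq_norm_fderiv, ofReal_norm]

theorem lintegral_enorm_fderiv_comp_sq_le {φ : ℂ → ℂ} {U : Set ℂ} (hU : IsOpen U)
    (hφ : DifferentiableOn ℂ φ U) (hinj : U.InjOn φ) {f : ℂ → F}
    (hf : ∀ z ∈ U, DifferentiableAt ℝ f (φ z)) :
    ∫⁻ z in U, ‖fderiv ℝ (f ∘ φ) z‖ₑ ^ 2 ≤ ∫⁻ w in φ '' U, ‖fderiv ℝ f w‖ₑ ^ 2 := by
  rw [lintegral_image_eq_lintegral_enorm_deriv_sq_mul hU.measurableSet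
    (fun z hz ↦ ((hφ.differentiableAt (hU.mem_nhds hz)).hasDerivAt.hasDerivWithinAt)) hinj]
  refine setLIntegral_mono' hU.measurableSet fun z hz ↦ ?_
  rw [← mul_pow]
  gcongr
  exact enorm_fderiv_comp_le (hφ.differentiableAt (hU.mem_nhds hz)) (hf z hz)

end ConformalChangeOfVariables

section ConformalPoincare

/-- The conformal (hyperbolic) `α`-dilatation `Q(α, Ω) = ∬_𝔻 |φ'|^α` of `Ω = φ(𝔻)`, as an extended
nonnegative number. -/
noncomputable def conformalDilatation (α : ℝ) (φ : ℂ → ℂ) : ℝ≥0∞ :=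
  ∫⁻ z in ball 0 1, ‖deriv φ z‖ₑ ^ α

variable {φ : ℂ → ℂ} {α : ℝ}

theorem volume_image_unitDisc_lt_top (hφ : DifferentiableOn ℂ φ (ball 0 1))
    (hinj : (ball 0 1).InjOn φ) (hα : 2 < α) (hQ : conformalDilatation α φ ≠ ∞) :
    volume (φ '' ball 0 1) < ∞ := by
  have hholder := lintegral_sq_mul_rpow_le (μ := volume.restrict (ball 0 1)) (k := 1) hα
    (measurable_deriv φ).enorm.aemeasurable aemeasurable_const
  simp only [Pi.one_apply, ENNReal.one_rpow, mul_one, lintegral_one, Measure.restrict_apply_univ]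
    at hholder
  rw [← setLIntegral_one, lintegral_image_eq_lintegral_enorm_deriv_sq_mul measurableSet_ball
    (fun z hz ↦ (hφ.differentiableAt (isOpen_ball.mem_nhds hz)).hasDerivAt.hasDerivWithinAt) hinj]
  simp only [mul_one]
  refine hholder.trans_lt (ENNReal.mul_lt_top ?_ ?_)
  · exact ENNReal.rpow_lt_top_of_nonneg (div_nonneg zero_le_two (by linarith)) hQ
  · exact ENNReal.rpow_lt_top_of_nonneg (div_nonneg (by linarith) (by linarith))
      measure_ball_lt_top.ne

theorem lintegral_enorm_sub_average_comp_sq_le {F : Type*} [NormedAddCommGroup F]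
    [NormedSpace ℝ F] [CompleteSpace F] (hφ : DifferentiableOn ℂ φ (ball 0 1))
    (hinj : (ball 0 1).InjOn φ) (hα : 2 < α) {f : ℂ → F}
    (hΩ : IsOpen (φ '' ball 0 1)) (hf : ContDiffOn ℝ 1 f (φ '' ball 0 1)) :
    ∫⁻ w in φ '' ball 0 1, ‖f w - ⨍ z in ball 0 1, f (φ z)‖ₑ ^ 2
      ≤ ENNReal.ofReal (discPoincareConst α) * conformalDilatation α φ ^ (2 / α) *
        ∫⁻ w in φ '' ball 0 1, ‖fderiv ℝ f w‖ₑ ^ 2 := by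
  have hu : ContDiffOn ℝ 1 (f ∘ φ) (ball 0 1) :=
    hf.comp ((hφ.contDiffOn isOpen_ball).restrict_scalars ℝ) (Set.mapsTo_image _ _)
  rw [lintegral_image_eq_lintegral_enorm_deriv_sq_mul measurableSet_ball
    (fun z hz ↦ (hφ.differentiableAt (isOpen_ball.mem_nhds hz)).hasDerivAt.hasDerivWithinAt) hinj]
  refine (lintegral_sq_mul_sq_enorm_sub_average_unitDisc_le hα hu
    (measurable_deriv φ).enorm).trans ?_
  refine mul_le_mul_right ?_ _
  exact lintegral_enorm_fderiv_comp_sq_le isOpen_ball hφ hinj fun z hz ↦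
    (hf.differentiableOn one_ne_zero).differentiableAt
      (hΩ.mem_nhds (Set.mem_image_of_mem φ hz))

theorem memLp_two_and_integral_sq_sub_average_le_of_conformalDilatation
    (hφ : DifferentiableOn ℂ φ (ball 0 1)) (hinj : (ball 0 1).InjOn φ) (hα : 2 < α)
    (hQ : conformalDilatation α φ ≠ ∞) {f : ℂ → ℝ}
    (hΩ : IsOpen (φ '' ball 0 1)) (hf : ContDiffOn ℝ 1 f (φ '' ball 0 1))
    (hf' : IntegrableOn (fun w ↦ ‖fderiv ℝ f w‖ ^ 2) (φ '' ball 0 1)) :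
    MemLp f 2 (volume.restrict (φ '' ball 0 1)) ∧
      ∫ w in φ '' ball 0 1, (f w - ⨍ w in φ '' ball 0 1, f w) ^ 2
        ≤ discPoincareConst α * (conformalDilatation α φ).toReal ^ (2 / α) *
          ∫ w in φ '' ball 0 1, ‖fderiv ℝ f w‖ ^ 2 := by
  set Ω := φ '' ball 0 1
  have : IsFiniteMeasure (volume.restrict Ω) :=
    isFiniteMeasure_restrict.2 (volume_image_unitDisc_lt_top hφ hinj hα hQ).ne
  have hconst : 0 < discPoincareConst α := discPoincareConst_pos hα
  have henergy : ∫⁻ w in Ω, ‖fderiv ℝ f w‖ₑ ^ 2 =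
      ENNReal.ofReal (∫ w in Ω, ‖fderiv ℝ f w‖ ^ 2) := by
    rw [ofReal_integral_eq_lintegral_ofReal hf' (ae_of_all _ fun w ↦ by positivity)]
    simp only [ENNReal.ofReal_pow (norm_nonneg _), ofReal_norm]
  have hbound : ∫⁻ w in Ω, ‖f w - ⨍ z in ball 0 1, f (φ z)‖ₑ ^ 2 ≤ ENNReal.ofReal
      (discPoincareConst α * (conformalDilatation α φ).toReal ^ (2 / α) *
        ∫ w in Ω, ‖fderiv ℝ f w‖ ^ 2) := by
    rw [mul_assoc, ENNReal.ofReal_mul hconst.le, ENNReal.ofReal_mul (by positivity),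
      ← henergy, ← mul_assoc, ENNReal.toReal_rpow, ENNReal.ofReal_toReal
        (ENNReal.rpow_ne_top_of_nonneg (div_nonneg zero_le_two (by linarith)) hQ)]
    exact lintegral_enorm_sub_average_comp_sq_le hφ hinj hα hΩ hf
  exact memLp_two_and_integral_sq_sub_average_le
    (hf.continuousOn.aestronglyMeasurable hΩ.measurableSet) (by positivity) hbound

end ConformalPoincare

section UnivalentInverse

open scoped Topology

variable {U : Set ℂ} {φ ψ : ℂ → ℂ}

theorem nhds_le_map_nhds_of_injOn (hU : IsOpen U) (hφ : DifferentiableOn ℂ φ U)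
    (hinj : U.InjOn φ) {z : ℂ} (hz : z ∈ U) : 𝓝 (φ z) ≤ (𝓝 z).map φ := by
  refine (hφ.analyticAt (hU.mem_nhds hz)).eventually_constant_or_nhds_le_map_nhds.resolve_left
    fun hconst ↦ ?_
  obtain ⟨w, hne, hw, hwU⟩ := Filter.nonempty_of_mem
    (inter_mem_nhdsWithin {z}ᶜ (hconst.and (hU.mem_nhds hz)))
  exact hne (hinj hwU hz hw)

theorem isOpen_image_of_injOn (hU : IsOpen U) (hφ : DifferentiableOn ℂ φ U)
    (hinj : U.InjOn φ) : IsOpen (φ '' U) := by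
  rw [isOpen_iff_mem_nhds]
  rintro _ ⟨z, hz, rfl⟩
  exact nhds_le_map_nhds_of_injOn hU hφ hinj hz (Filter.image_mem_map (hU.mem_nhds hz))

theorem continuousAt_of_leftInvOn (hU : IsOpen U) (hφ : DifferentiableOn ℂ φ U)
    (hψ : Set.LeftInvOn ψ φ U) {z : ℂ} (hz : z ∈ U) : ContinuousAt ψ (φ z) := by
  have hid : Filter.Tendsto (ψ ∘ φ) (𝓝 z) (𝓝 z) :=
    Filter.tendsto_id.congr' <| (hU.eventually_mem hz).mono fun _ hw ↦ (hψ hw).symm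
  rw [ContinuousAt, hψ hz]
  exact (Filter.tendsto_map'_iff.2 hid).mono_left
    (nhds_le_map_nhds_of_injOn hU hφ hψ.injOn hz)

theorem eventually_deriv_ne_zero_of_injOn (hU : IsOpen U) (hφ : DifferentiableOn ℂ φ U)
    (hinj : U.InjOn φ) {z : ℂ} (hz : z ∈ U) : ∀ᶠ w in 𝓝[≠] z, deriv φ w ≠ 0 := by
  refine (hφ.analyticAt (hU.mem_nhds hz)).deriv.eventually_eq_zero_or_eventually_ne_zero
    |>.resolve_left fun hzero ↦ ?_
  obtain ⟨ε, hε, hball⟩ := Metric.eventually_nhds_iff_ball.1 (hzero.and (hU.mem_nhds hz))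
  obtain ⟨w, hwz, hw⟩ := Filter.nonempty_of_mem
    (inter_mem_nhdsWithin {z}ᶜ (ball_mem_nhds z hε))
  have hconst : φ w = φ z := isOpen_ball.is_const_of_deriv_eq_zero
    (convex_ball z ε).isPreconnected (hφ.mono fun x hx ↦ (hball x hx).2)
    (fun x hx ↦ (hball x hx).1) hw (mem_ball_self hε)
  exact hwz (hinj (hball w hw).2 hz hconst)

theorem differentiableAt_of_leftInvOn (hU : IsOpen U) (hφ : DifferentiableOn ℂ φ U)
    (hψ : Set.LeftInvOn ψ φ U) {z : ℂ} (hz : z ∈ U) (hne : deriv φ z ≠ 0) :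
    DifferentiableAt ℂ ψ (φ z) := by
  have hderiv : HasDerivAt φ (deriv φ z) (ψ (φ z)) := by
    rw [hψ hz]
    exact (hφ.differentiableAt (hU.mem_nhds hz)).hasDerivAt
  have hright : ∀ᶠ w in 𝓝 (φ z), φ (ψ w) = w :=
    ((isOpen_image_of_injOn hU hφ hψ.injOn).eventually_mem ⟨z, hz, rfl⟩).mono
      hψ.rightInvOn_image
  exact (hderiv.of_local_left_inverse (continuousAt_of_leftInvOn hU hφ hψ hz) hne
    hright).differentiableAt

-- The zeros of `deriv φ` are isolated, so `ψ` extends holomorphically over their images.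
theorem differentiableOn_image_of_leftInvOn (hU : IsOpen U) (hφ : DifferentiableOn ℂ φ U)
    (hψ : Set.LeftInvOn ψ φ U) : DifferentiableOn ℂ ψ (φ '' U) := by
  rintro _ ⟨z, hz, rfl⟩
  have hcont := continuousAt_of_leftInvOn hU hφ hψ hz
  have hpunctured : ∀ᶠ w in 𝓝[≠] (φ z), DifferentiableAt ℂ ψ w := by
    have hne := eventually_nhdsWithin_iff.1 (eventually_deriv_ne_zero_of_injOn hU hφ hψ.injOn hz)
    rw [← hψ hz] at hne
    rw [eventually_nhdsWithin_iff]
    filter_upwards [hcont.eventually hne,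
      (isOpen_image_of_injOn hU hφ hψ.injOn).mem_nhds ⟨z, hz, rfl⟩]
    rintro _ hw ⟨x, hx, rfl⟩ hxz
    rw [hψ hx, hψ hz] at hw
    exact differentiableAt_of_leftInvOn hU hφ hψ hx (hw fun h ↦ hxz (congrArg φ h))
  exact (Complex.analyticAt_of_differentiable_on_punctured_nhds_of_continuousAt hpunctured
    hcont).differentiableAt.differentiableWithinAt

end UnivalentInverse

section SchwarzPick

open scoped ComplexConjugate

theorem sq_norm_one_sub_conj_mul_sub_sq_norm_sub (a w : ℂ) :
    ‖1 - conj a * w‖ ^ 2 - ‖w - a‖ ^ 2 = (1 - ‖a‖ ^ 2) * (1 - ‖w‖ ^ 2) := by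
  simp only [← Complex.normSq_eq_norm_sq, Complex.normSq_apply, Complex.sub_re, Complex.sub_im,
    Complex.mul_re, Complex.mul_im, Complex.conj_re, Complex.conj_im, Complex.one_re,
    Complex.one_im]
  ring

theorem one_sub_norm_le_norm_one_sub_conj_mul (a : ℂ) {w : ℂ} (hw : ‖w‖ ≤ 1) :
    1 - ‖a‖ ≤ ‖1 - conj a * w‖ := by
  have hle := norm_sub_norm_le 1 (conj a * w)
  rw [norm_one, norm_mul, Complex.norm_conj] at hle
  linarith [mul_le_of_le_one_right (norm_nonneg a) hw]

theorem norm_sub_le_norm_mul_norm_one_sub_conj_mul {F : ℂ → ℂ}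
    (hF : DifferentiableOn ℂ F (ball 0 1)) (hmaps : Set.MapsTo F (ball 0 1) (ball 0 1)) {ζ : ℂ}
    (hζ : ζ ∈ ball (0 : ℂ) 1) : ‖F ζ - F 0‖ ≤ ‖ζ‖ * ‖1 - conj (F 0) * F ζ‖ := by
  have hnorm {x : ℂ} (hx : x ∈ ball (0 : ℂ) 1) : ‖F x‖ < 1 := mem_ball_zero_iff.1 (hmaps hx)
  have h0 : ‖F 0‖ < 1 := hnorm (mem_ball_self one_pos)
  have hden {x : ℂ} (hx : x ∈ ball (0 : ℂ) 1) : 0 < ‖1 - conj (F 0) * F x‖ :=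
    (sub_pos.2 h0).trans_le (one_sub_norm_le_norm_one_sub_conj_mul _ (hnorm hx).le)
  let G : ℂ → ℂ := fun x ↦ (F x - F 0) / (1 - conj (F 0) * F x)
  have hG : DifferentiableOn ℂ G (ball 0 1) :=
    (hF.sub_const _).div ((hF.const_mul _).const_sub _) fun x hx ↦ norm_pos_iff.1 (hden hx)
  have hGmaps : Set.MapsTo G (ball 0 1) (closedBall 0 1) := fun x hx ↦ by
    rw [mem_closedBall_zero_iff, norm_div, div_le_one (hden hx),
      ← sq_le_sq₀ (norm_nonneg _) (norm_nonneg _), ← sub_nonneg,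
      sq_norm_one_sub_conj_mul_sub_sq_norm_sub]
    exact mul_nonneg (sub_nonneg.2 (pow_le_one₀ (norm_nonneg _) h0.le))
      (sub_nonneg.2 (pow_le_one₀ (norm_nonneg _) (hnorm hx).le))
  have hschwarz : ‖G ζ‖ ≤ ‖ζ‖ :=
    Complex.norm_le_norm_of_mapsTo_ball hG hGmaps (by simp [G]) (mem_ball_zero_iff.1 hζ)
  rwa [norm_div, div_le_iff₀ (hden hζ)] at hschwarz

theorem sq_one_sub_mul_one_sub_norm_le_one_sub_norm {F : ℂ → ℂ}
    (hF : DifferentiableOn ℂ F (ball 0 1)) (hmaps : Set.MapsTo F (ball 0 1) (ball 0 1)) {ρ : ℝ}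
    (hρ : ρ < 1) (h0 : ‖F 0‖ ≤ ρ) {ζ : ℂ} (hζ : ζ ∈ ball (0 : ℂ) 1) :
    (1 - ρ) ^ 2 / 2 * (1 - ‖ζ‖) ≤ 1 - ‖F ζ‖ := by
  have hζ1 : ‖ζ‖ < 1 := mem_ball_zero_iff.1 hζ
  have hFζ : ‖F ζ‖ < 1 := mem_ball_zero_iff.1 (hmaps hζ)
  have hpick := norm_sub_le_norm_mul_norm_one_sub_conj_mul hF hmaps hζ
  have hid := sq_norm_one_sub_conj_mul_sub_sq_norm_sub (F 0) (F ζ)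
  have hden := one_sub_norm_le_norm_one_sub_conj_mul (F 0) hFζ.le
  set N := ‖1 - conj (F 0) * F ζ‖
  have hsq : (1 - ρ) ^ 2 * (1 - ‖ζ‖ ^ 2) ≤ 1 - ‖F ζ‖ ^ 2 := calc
    (1 - ρ) ^ 2 * (1 - ‖ζ‖ ^ 2) ≤ N ^ 2 * (1 - ‖ζ‖ ^ 2) := by
      have : ‖ζ‖ ^ 2 ≤ 1 := pow_le_one₀ (norm_nonneg ζ) hζ1.le
      gcongr
      linarith
    _ = N ^ 2 - (‖ζ‖ * N) ^ 2 := by ring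
    _ ≤ N ^ 2 - ‖F ζ - F 0‖ ^ 2 := by gcongr
    _ = (1 - ‖F 0‖ ^ 2) * (1 - ‖F ζ‖ ^ 2) := hid
    _ ≤ 1 - ‖F ζ‖ ^ 2 :=
      mul_le_of_le_one_left (sub_nonneg.2 (pow_le_one₀ (norm_nonneg _) hFζ.le))
        (sub_le_self _ (sq_nonneg _))
  nlinarith [norm_nonneg (F ζ), norm_nonneg ζ, mul_nonneg (sq_nonneg (1 - ρ)) (norm_nonneg ζ)]

end SchwarzPick

section OmittedValues

open scoped ComplexConjugate

variable {c : ℂ} {R : ℝ}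

theorem norm_sub_le_norm_add_conj {a w : ℂ} (ha : 0 ≤ a.re) (hw : 0 ≤ w.re) :
    ‖w - a‖ ≤ ‖w + conj a‖ := by
  rw [← sq_le_sq₀ (norm_nonneg _) (norm_nonneg _)]
  simp only [← Complex.normSq_eq_norm_sq, Complex.normSq_apply, Complex.sub_re, Complex.sub_im,
    Complex.add_re, Complex.add_im, Complex.conj_re, Complex.conj_im]
  linarith [mul_nonneg ha hw]

-- The Cayley transform at `u c` sends the right half-plane to the unit disc and `u c` to `0`.
theorem norm_deriv_mul_le_of_re_pos (hR : 0 < R) {u : ℂ → ℂ} (hu : DifferentiableOn ℂ u (ball c R))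
    (hre : ∀ z ∈ ball c R, 0 < (u z).re) : ‖deriv u c‖ * R ≤ 2 * (u c).re := by
  have hc := hre c (mem_ball_self hR)
  have hne {z : ℂ} (hz : z ∈ ball c R) : u z + conj (u c) ≠ 0 := fun h ↦ by
    have := congrArg Complex.re h
    rw [Complex.add_re, Complex.conj_re, Complex.zero_re] at this
    linarith [hre z hz]
  let G : ℂ → ℂ := fun z ↦ (u z - u c) / (u z + conj (u c))
  have hG : DifferentiableOn ℂ G (ball c R) :=
    (hu.sub_const _).div (hu.add_const _) fun z hz ↦ hne hz
  have hGc : G c = 0 := by simp only [G, sub_self, zero_div]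
  have hGmaps : Set.MapsTo G (ball c R) (closedBall (G c) 1) := fun z hz ↦ by
    rw [hGc, mem_closedBall_zero_iff, norm_div]
    exact div_le_one_of_le₀ (norm_sub_le_norm_add_conj hc.le (hre z hz).le) (norm_nonneg _)
  have hderiv : deriv G c = deriv u c / (2 * (u c).re : ℝ) := by
    have hud := (hu.differentiableAt (ball_mem_nhds c hR)).hasDerivAt
    refine (((hud.sub_const (u c)).div (hud.add_const (conj (u c)))
      (hne (mem_ball_self hR))).congr_deriv ?_).deriv
    have h2 := hne (mem_ball_self hR)
    rw [Complex.add_conj] at h2 ⊢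
    field_simp
    ring
  have hschwarz := Complex.norm_deriv_le_div_of_mapsTo_ball hG hGmaps hR
  rwa [hderiv, norm_div, Complex.norm_of_nonneg (by positivity),
    div_le_div_iff₀ (by positivity) hR, one_mul] at hschwarz

theorem re_sqrt_pos_of_mem_slitPlane {w : ℂ} (hw : w ∈ Complex.slitPlane) : 0 < w.sqrt.re := by
  rw [Complex.sqrt, Complex.cpow_inv_two_re, Real.sqrt_pos]
  rcases hw with hre | him
  · linarith [norm_nonneg w]
  · linarith [neg_le_abs w.re, Complex.abs_re_lt_norm.2 him]

theorem norm_deriv_mul_le_of_mapsTo_slitPlane (hR : 0 < R) {q : ℂ → ℂ}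
    (hq : DifferentiableOn ℂ q (ball c R)) (hmaps : Set.MapsTo q (ball c R) Complex.slitPlane) :
    ‖deriv q c‖ * R ≤ 4 * ‖q c‖ := by
  let u : ℂ → ℂ := fun z ↦ (q z).sqrt
  have hu : DifferentiableOn ℂ u (ball c R) := Complex.differentiableOn_sqrt.comp hq hmaps
  have husq (z : ℂ) : u z ^ 2 = q z := Complex.cpow_ofNat_inv_pow (q z) 2
  have hud := (hu.differentiableAt (ball_mem_nhds c hR)).hasDerivAt
  have hderiv : deriv q c = 2 * u c * deriv u c := by
    simpa [husq] using (hud.fun_pow 2).deriv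
  calc ‖deriv q c‖ * R = 2 * ‖u c‖ * (‖deriv u c‖ * R) := by
        rw [hderiv, norm_mul, norm_mul, Complex.norm_two]; ring
    _ ≤ 2 * ‖u c‖ * (2 * (u c).re) := by
        refine mul_le_mul_of_nonneg_left (norm_deriv_mul_le_of_re_pos hR hu fun z hz ↦ ?_)
          (by positivity)
        exact re_sqrt_pos_of_mem_slitPlane (hmaps hz)
    _ ≤ 2 * ‖u c‖ * (2 * ‖u c‖) := by
        have := Complex.re_le_norm (u c)
        gcongr
    _ = 4 * ‖q c‖ := by rw [← husq, norm_pow]; ring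

theorem div_mem_slitPlane_of_notMem_segment {b b' w : ℂ} (hw : w ∉ segment ℝ b b') :
    (w - b) / (w - b') ∈ Complex.slitPlane := by
  have hne : w - b' ≠ 0 := fun h ↦ hw (sub_eq_zero.1 h ▸ right_mem_segment ℝ b b')
  rw [Complex.mem_slitPlane_iff, ← Complex.not_le_zero_iff, Complex.nonpos_iff]
  rintro ⟨hre, him⟩
  have hray : w - b = -((w - b) / (w - b')).re • (b' - w) := by
    rw [Complex.real_smul, Complex.ofReal_neg,
      Complex.conj_eq_iff_re.1 (Complex.conj_eq_iff_im.2 him)]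
    field_simp
    ring
  rw [mem_segment_iff_sameRay, hray] at hw
  exact hw (SameRay.sameRay_nonneg_smul_left _ (neg_nonneg.2 hre))

theorem norm_deriv_mul_le_of_disjoint_segment (hR : 0 < R) {φ : ℂ → ℂ}
    (hφ : DifferentiableOn ℂ φ (ball c R)) {b b' : ℂ}
    (hdisj : ∀ z ∈ ball c R, φ z ∉ segment ℝ b b') :
    ‖deriv φ c‖ * R * ‖b - b'‖ ≤ 4 * (‖φ c - b‖ * ‖φ c - b'‖) := by
  have hne {z : ℂ} (hz : z ∈ ball c R) : φ z - b' ≠ 0 := fun h ↦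
    hdisj z hz (sub_eq_zero.1 h ▸ right_mem_segment ℝ b b')
  have hq : DifferentiableOn ℂ (fun z ↦ (φ z - b) / (φ z - b')) (ball c R) :=
    (hφ.sub_const b).div (hφ.sub_const b') fun z hz ↦ hne hz
  have hslit := norm_deriv_mul_le_of_mapsTo_slitPlane hR hq fun z hz ↦
    div_mem_slitPlane_of_notMem_segment (hdisj z hz)
  have hφd := (hφ.differentiableAt (ball_mem_nhds c hR)).hasDerivAt
  have hc : 0 < ‖φ c - b'‖ := norm_pos_iff.2 (hne (mem_ball_self hR))
  have hderiv : deriv (fun z ↦ (φ z - b) / (φ z - b')) c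
      = deriv φ c * (b - b') / (φ c - b') ^ 2 :=
    (((hφd.sub_const b).div (hφd.sub_const b') (hne (mem_ball_self hR))).congr_deriv
      (by ring)).deriv
  rw [hderiv, norm_div, norm_div, norm_mul, norm_pow] at hslit
  calc ‖deriv φ c‖ * R * ‖b - b'‖
      = ‖deriv φ c‖ * ‖b - b'‖ / ‖φ c - b'‖ ^ 2 * R * ‖φ c - b'‖ ^ 2 := by field_simp
    _ ≤ 4 * (‖φ c - b‖ / ‖φ c - b'‖) * ‖φ c - b'‖ ^ 2 := by gcongr
    _ = 4 * (‖φ c - b‖ * ‖φ c - b'‖) := by field_simp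

end OmittedValues

section C1Domains

variable {E F : Type*}

section Inverse

variable [NormedAddCommGroup E] [NormedSpace ℝ E] [FiniteDimensional ℝ E]

theorem exists_contDiff_inverse_of_bijective {n : WithTop ℕ∞} (hn : n ≠ 0) {Φ : E → E}
    (hΦ : ContDiff ℝ n Φ) (hbij : Function.Bijective Φ) (hdet : ∀ x, (fderiv ℝ Φ x).det ≠ 0) :
    ∃ Ψ : E → E, ContDiff ℝ n Ψ ∧ Function.LeftInverse Ψ Φ ∧ Function.RightInverse Ψ Φ := by
  have : CompleteSpace E := FiniteDimensional.complete ℝ E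
  have hstrict (x : E) : HasStrictFDerivAt Φ
      ((fderiv ℝ Φ x).toContinuousLinearEquivOfDetNeZero (hdet x) : E →L[ℝ] E) x := by
    rw [ContinuousLinearMap.coe_toContinuousLinearEquivOfDetNeZero]
    exact hΦ.contDiffAt.hasStrictFDerivAt hn
  let H : E ≃ₜ E := (Equiv.ofBijective Φ hbij).toHomeomorphOfContinuousOpen hΦ.continuous
    (isOpenMap_of_hasStrictFDerivAt_equiv hstrict)
  exact ⟨H.symm, H.contDiff_symm (fun x ↦ (hstrict x).hasFDerivAt) hΦ,
    H.symm_apply_apply, H.apply_symm_apply⟩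

end Inverse

section DefiningFunction

variable [NormedAddCommGroup E] [NormedSpace ℝ E]

/-- `r` is a `C¹` defining function of `Ω`: the domain is `{r < 0}`, and the differential of `r`
vanishes nowhere on `{r = 0}`. The existence of such an `r` is how a `C¹` boundary is encoded. -/
structure IsC1DefiningFunction (r : E → ℝ) (Ω : Set E) : Prop where
  contDiff : ContDiff ℝ 1 r
  neg_iff_mem : ∀ x, r x < 0 ↔ x ∈ Ω
  fderiv_ne_zero : ∀ x, r x = 0 → fderiv ℝ r x ≠ 0

theorem IsC1DefiningFunction.nonpos_of_mem_closure {r : E → ℝ} {Ω : Set E}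
    (hr : IsC1DefiningFunction r Ω) {x : E} (hx : x ∈ closure Ω) : r x ≤ 0 :=
  closure_minimal (fun y hy ↦ ((hr.neg_iff_mem y).2 hy).le)
    (isClosed_le hr.contDiff.continuous continuous_const) hx

theorem IsC1DefiningFunction.comp_rightInverse {r : E → ℝ} {Ω : Set E}
    (hr : IsC1DefiningFunction r Ω) {Φ Ψ : E → E} (hΦ : Differentiable ℝ Φ)
    (hΨ : ContDiff ℝ 1 Ψ) (hleft : Function.LeftInverse Ψ Φ)
    (hright : Function.RightInverse Ψ Φ) :
    IsC1DefiningFunction (r ∘ Ψ) (Φ '' Ω) where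
  contDiff := hr.contDiff.comp hΨ
  neg_iff_mem x := by
    rw [Set.image_eq_preimage_of_inverse hleft hright]
    exact hr.neg_iff_mem (Ψ x)
  fderiv_ne_zero x hx h0 := by
    have hcomp : fderiv ℝ ((r ∘ Ψ) ∘ Φ) (Ψ x) = 0 := by
      rw [fderiv_comp _ ((hr.contDiff.comp hΨ).differentiable one_ne_zero _) (hΦ _), hright x, h0,
        ContinuousLinearMap.zero_comp]
    rw [Function.comp_assoc, hleft.comp_eq_id, Function.comp_id] at hcomp
    exact hr.fderiv_ne_zero _ hx hcomp

end DefiningFunction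

theorem isC1DefiningFunction_sq_norm_sub_one [NormedAddCommGroup E] [InnerProductSpace ℝ E] :
    IsC1DefiningFunction (fun x : E ↦ ‖x‖ ^ 2 - 1) (ball 0 1) where
  contDiff := (contDiff_norm_sq ℝ).sub contDiff_const
  neg_iff_mem x := by
    rw [mem_ball_zero_iff, sub_neg, sq_lt_one_iff₀ (norm_nonneg x)]
  fderiv_ne_zero x hx h0 := by
    rw [fderiv_sub_const] at h0
    have hxx : 2 * ‖x‖ ^ 2 = 0 := by
      simpa [fderiv_norm_sq_apply] using DFunLike.congr_fun h0 x
    linarith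

theorem exists_isC1DefiningFunction_image_ball [NormedAddCommGroup E] [InnerProductSpace ℝ E]
    [FiniteDimensional ℝ E] {Φ : E → E} (hΦ : ContDiff ℝ 1 Φ) (hbij : Function.Bijective Φ)
    (hdet : ∀ x, (fderiv ℝ Φ x).det ≠ 0) : ∃ r, IsC1DefiningFunction r (Φ '' ball 0 1) := by
  obtain ⟨Ψ, hΨ, hleft, hright⟩ := exists_contDiff_inverse_of_bijective one_ne_zero hΦ hbij hdet
  exact ⟨_, isC1DefiningFunction_sq_norm_sub_one.comp_rightInverse
    (hΦ.differentiable one_ne_zero) hΨ hleft hright⟩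

theorem isBounded_image_ball_of_continuous [PseudoMetricSpace E] [ProperSpace E]
    [PseudoMetricSpace F] {Φ : E → F} (hΦ : Continuous Φ) (x : E) (R : ℝ) :
    Bornology.IsBounded (Φ '' ball x R) :=
  ((isCompact_closedBall x R).image hΦ).isBounded.subset (Set.image_mono ball_subset_closedBall)

theorem exists_forall_norm_sub_sub_fderiv_le [NormedAddCommGroup E] [NormedSpace ℝ E]
    [NormedAddCommGroup F] [NormedSpace ℝ F] {r : E → F} (hr : ContDiff ℝ 1 r) {S : Set E}
    (hS : IsCompact S) {ε : ℝ} (hε : 0 < ε) :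
    ∃ h > 0, ∀ b ∈ S, ∀ v : E, ‖v‖ ≤ h → ‖r (b + v) - r b - fderiv ℝ r b v‖ ≤ ε * ‖v‖ := by
  have hunif := hS.uniformContinuousAt_of_continuousAt (fderiv ℝ r)
    (fun _ _ ↦ (hr.continuous_fderiv one_ne_zero).continuousAt) (dist_mem_uniformity hε)
  obtain ⟨δ, hδ, hclose⟩ := mem_uniformity_dist.1 hunif
  refine ⟨δ / 2, half_pos hδ, fun b hb v hv ↦ ?_⟩
  have hbound : ∀ y ∈ ball b δ, ‖fderiv ℝ r y - fderiv ℝ r b‖ ≤ ε := fun y hy ↦ by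
    rw [← dist_eq_norm, dist_comm]
    exact (hclose (mem_ball'.1 hy) hb).le
  have hbv : b + v ∈ ball b δ := by
    rw [mem_ball_iff_norm, add_sub_cancel_left]
    linarith
  simpa only [add_sub_cancel_left] using (convex_ball b δ).norm_image_sub_le_of_norm_fderiv_le'
    (fun y _ ↦ hr.differentiable one_ne_zero y) hbound (mem_ball_self hδ) hbv

end C1Domains

section Cones

open scoped RealInnerProductSpace

variable {E : Type*} [NormedAddCommGroup E] [InnerProductSpace ℝ E]

theorem apply_mul_norm_eq_neg_norm_mul_inner [CompleteSpace E] {L : E →L[ℝ] ℝ} {x : E}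
    (h : ∀ u, ‖u‖ ≤ ‖x‖ → L (x + u) ≤ 0) (v : E) : L v * ‖x‖ = -(‖L‖ * ⟪x, v⟫) := by
  set g := (InnerProductSpace.toDual ℝ E).symm L
  have hL (y : E) : L y = ⟪g, y⟫ := (InnerProductSpace.toDual_symm_apply).symm
  have hg : ‖L‖ = ‖g‖ := (LinearIsometryEquiv.norm_map _ L).symm
  have hopp : ⟪x, g⟫ ≤ -(‖x‖ * ‖g‖) := by
    have hu : ‖(‖x‖ / ‖g‖) • g‖ ≤ ‖x‖ := by
      rw [norm_smul, norm_div, norm_norm, norm_norm, div_mul_comm]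
      exact mul_le_of_le_one_left (norm_nonneg x) (div_self_le_one _)
    have hneg := h _ hu
    have hself : ‖x‖ / ‖g‖ * ‖g‖ ^ 2 = ‖x‖ * ‖g‖ := by
      rcases eq_or_ne ‖g‖ 0 with h0 | h0
      · simp [h0]
      · field_simp
    rw [map_add, hL, hL, inner_smul_right, real_inner_self_eq_norm_sq, hself,
      real_inner_comm] at hneg
    linarith
  have heq : ⟪x, -g⟫ = ‖x‖ * ‖-g‖ := by
    refine le_antisymm (real_inner_le_norm _ _) ?_
    rw [inner_neg_right, norm_neg]
    linarith
  have hparallel := congrArg (⟪·, v⟫) (inner_eq_norm_mul_iff_real.1 heq)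
  simp only [norm_neg, real_inner_smul_left, inner_neg_left] at hparallel
  rw [hL, hg, hparallel]
  ring

/-- The uniform two-sided cone condition: if `b` is a point of `Ωᶜ` nearest to `w ∈ Ω`, then the
truncated cone with vertex `b`, axis pointing to `w`, half-opening `arccos κ` and height `h` lies
in `Ω`, and its reflection through `b` lies in `Ωᶜ`. -/
def TwoSidedConeCondition (κ h : ℝ) (Ω : Set E) : Prop :=
  ∀ w ∈ Ω, ∀ b ∉ Ω, dist w b = infDist w Ωᶜ → ∀ v ≠ 0, ‖v‖ ≤ h →
    κ * dist w b * ‖v‖ ≤ ⟪w - b, v⟫ → b + v ∈ Ω ∧ b - v ∉ Ω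

variable {r : E → ℝ} {Ω : Set E} {w b : E}

theorem mem_closure_of_dist_eq_infDist_compl (hw : w ∈ Ω) (hwb : dist w b = infDist w Ωᶜ) :
    b ∈ closure Ω :=
  closedBall_infDist_compl_subset_closure hw (mem_closedBall'.2 hwb.le)

namespace IsC1DefiningFunction

variable (hr : IsC1DefiningFunction r Ω)
include hr

theorem eq_zero_of_dist_eq_infDist (hw : w ∈ Ω) (hb : b ∉ Ω) (hwb : dist w b = infDist w Ωᶜ) :
    r b = 0 :=
  le_antisymm (hr.nonpos_of_mem_closure (mem_closure_of_dist_eq_infDist_compl hw hwb))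
    (not_lt.1 fun h ↦ hb ((hr.neg_iff_mem b).1 h))

-- The ball around `w` touching `∂Ω` at `b` lies in `{r ≤ 0}`, so `b` maximises `r` on it.
theorem fderiv_mul_dist_eq [CompleteSpace E] (hw : w ∈ Ω) (hb : b ∉ Ω)
    (hwb : dist w b = infDist w Ωᶜ) (v : E) :
    fderiv ℝ r b v * dist w b = -(‖fderiv ℝ r b‖ * ⟪w - b, v⟫) := by
  have hball : closedBall w (dist w b) ⊆ closure Ω :=
    hwb ▸ closedBall_infDist_compl_subset_closure hw
  have hmax : IsLocalMaxOn r (closedBall w (dist w b)) b := by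
    filter_upwards [self_mem_nhdsWithin] with y hy
    rw [hr.eq_zero_of_dist_eq_infDist hw hb hwb]
    exact hr.nonpos_of_mem_closure (hball hy)
  rw [dist_eq_norm]
  refine apply_mul_norm_eq_neg_norm_mul_inner (fun u hu ↦ ?_) v
  have hwu : w + u ∈ closedBall w (dist w b) := by
    rwa [mem_closedBall_iff_norm, add_sub_cancel_left, dist_eq_norm]
  have hcone := sub_mem_posTangentConeAt_of_segment_subset
    ((convex_closedBall w (dist w b)).segment_subset (dist_comm b w).le hwu)
  rw [sub_add_eq_add_sub]
  exact hmax.hasFDerivWithinAt_nonpos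
    (hr.contDiff.differentiable one_ne_zero b).hasFDerivAt.hasFDerivWithinAt hcone

theorem exists_pos_le_norm_fderiv [ProperSpace E] (hΩ : Bornology.IsBounded Ω) :
    ∃ m > 0, ∀ b ∈ closure Ω, r b = 0 → m ≤ ‖fderiv ℝ r b‖ := by
  have hK : IsCompact (closure Ω ∩ {b | r b = 0}) :=
    hΩ.isCompact_closure.inter_right (isClosed_eq hr.contDiff.continuous continuous_const)
  obtain ⟨m, hm, hle⟩ := hK.exists_forall_le'
    (hr.contDiff.continuous_fderiv one_ne_zero).norm.continuousOn
    fun b hb ↦ norm_pos_iff.2 (hr.fderiv_ne_zero b hb.2)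
  exact ⟨m, hm, fun b hb h0 ↦ hle b ⟨hb, h0⟩⟩

theorem exists_twoSidedConeCondition [ProperSpace E] (hΩ : Bornology.IsBounded Ω)
    {κ : ℝ} (hκ : 0 < κ) : ∃ h > 0, TwoSidedConeCondition κ h Ω := by
  obtain ⟨m, hm, hle⟩ := hr.exists_pos_le_norm_fderiv hΩ
  obtain ⟨h, hh, htaylor⟩ := exists_forall_norm_sub_sub_fderiv_le hr.contDiff
    hΩ.isCompact_closure (ε := m * κ / 2) (by positivity)
  refine ⟨h, hh, fun w hw b hb hwb v hv hvh hcone ↦ ?_⟩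
  have hbc := mem_closure_of_dist_eq_infDist_compl hw hwb
  have hb0 := hr.eq_zero_of_dist_eq_infDist hw hb hwb
  have hd : 0 < dist w b := dist_pos.2 (ne_of_mem_of_not_mem hw hb)
  have hv' : 0 < m * κ * ‖v‖ := mul_pos (mul_pos hm hκ) (norm_pos_iff.2 hv)
  have hdescent : fderiv ℝ r b v ≤ -(m * κ * ‖v‖) := by
    refine le_of_mul_le_mul_right ?_ hd
    calc fderiv ℝ r b v * dist w b = -(‖fderiv ℝ r b‖ * ⟪w - b, v⟫) :=
          hr.fderiv_mul_dist_eq hw hb hwb v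
      _ ≤ -(m * (κ * dist w b * ‖v‖)) :=
          neg_le_neg (mul_le_mul (hle b hbc hb0) hcone (by positivity) (norm_nonneg _))
      _ = -(m * κ * ‖v‖) * dist w b := by ring
  have hplus := htaylor b hbc v hvh
  have hminus := htaylor b hbc (-v) (by rwa [norm_neg])
  rw [hb0, sub_zero, Real.norm_eq_abs, abs_le] at hplus hminus
  rw [map_neg, norm_neg, ← sub_eq_add_neg] at hminus
  rw [← hr.neg_iff_mem, ← hr.neg_iff_mem]
  exact ⟨by linarith, by linarith⟩

end IsC1DefiningFunction

end Cones

section SectorDecay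

open scoped RealInnerProductSpace

theorem cos_mul_norm_cpow_le_re_cpow {γ : ℝ} (hγ0 : 0 ≤ γ) (hγ2 : γ ≤ 2) {w : ℂ} (hw : 0 ≤ w.re) :
    cos (γ * (π / 2)) * ‖w ^ (γ : ℂ)‖ ≤ (w ^ (γ : ℂ)).re := by
  rw [Complex.norm_cpow_real, Complex.cpow_ofReal_re, mul_comm, mul_comm γ]
  refine mul_le_mul_of_nonneg_left ?_ (rpow_nonneg (norm_nonneg w) γ)
  rw [← cos_abs (w.arg * γ), abs_mul, abs_of_nonneg hγ0]
  have harg : |w.arg| * γ ≤ π / 2 * γ :=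
    mul_le_mul_of_nonneg_right (Complex.abs_arg_le_pi_div_two_iff.2 hw) hγ0
  exact cos_le_cos_of_nonneg_of_le_pi (by positivity) (by nlinarith [pi_pos]) harg

theorem one_sub_re_pos_of_mem_ball {ζ : ℂ} (hζ : ζ ∈ ball (0 : ℂ) 1) : 0 < (1 - ζ).re := by
  rw [Complex.sub_re, Complex.one_re, sub_pos]
  exact (Complex.re_le_norm ζ).trans_lt (mem_ball_zero_iff.1 hζ)

theorem norm_one_sub_cpow_le_two {γ : ℝ} (hγ0 : 0 ≤ γ) (hγ1 : γ ≤ 1) {ζ : ℂ}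
    (hζ : ζ ∈ ball (0 : ℂ) 1) : ‖(1 - ζ) ^ (γ : ℂ)‖ ≤ 2 := by
  have hnorm : ‖1 - ζ‖ ≤ 2 := by
    linarith [norm_sub_le 1 ζ, norm_one (α := ℂ), mem_ball_zero_iff.1 hζ]
  calc ‖(1 - ζ) ^ (γ : ℂ)‖ = ‖1 - ζ‖ ^ γ := Complex.norm_cpow_real _ _
    _ ≤ 2 ^ γ := rpow_le_rpow (norm_nonneg _) hnorm hγ0
    _ ≤ 2 := rpow_le_self_of_one_le one_le_two hγ1

theorem add_mul_one_sub_cpow_mem {γ : ℝ} (hγ0 : 0 ≤ γ) (hγ1 : γ ≤ 1) {U : Set ℂ} {b p : ℂ}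
    (hp : p ≠ 0) (hU : ∀ v ≠ 0, ‖v‖ ≤ 2 * ‖p‖ → cos (γ * (π / 2)) * ‖p‖ * ‖v‖ ≤ ⟪p, v⟫ → b + v ∈ U)
    {ζ : ℂ} (hζ : ζ ∈ ball (0 : ℂ) 1) : b + p * (1 - ζ) ^ (γ : ℂ) ∈ U := by
  have hre := one_sub_re_pos_of_mem_ball hζ
  have hinner : ⟪p, p * (1 - ζ) ^ (γ : ℂ)⟫ = ‖p‖ ^ 2 * ((1 - ζ) ^ (γ : ℂ)).re := by
    rw [Complex.inner, mul_right_comm, Complex.mul_conj', ← Complex.ofReal_pow,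
      Complex.re_ofReal_mul]
  refine hU _ (mul_ne_zero hp ?_) ?_ ?_
  · rw [Complex.cpow_ne_zero_iff]
    exact Or.inl fun h ↦ hre.ne' (by rw [h, Complex.zero_re])
  · rw [norm_mul, mul_comm]
    exact mul_le_mul_of_nonneg_right (norm_one_sub_cpow_le_two hγ0 hγ1 hζ) (norm_nonneg p)
  · rw [hinner, norm_mul]
    calc cos (γ * (π / 2)) * ‖p‖ * (‖p‖ * ‖(1 - ζ) ^ (γ : ℂ)‖)
        = ‖p‖ ^ 2 * (cos (γ * (π / 2)) * ‖(1 - ζ) ^ (γ : ℂ)‖) := by ring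
      _ ≤ ‖p‖ ^ 2 * ((1 - ζ) ^ (γ : ℂ)).re := mul_le_mul_of_nonneg_left
          (cos_mul_norm_cpow_le_re_cpow hγ0 (hγ1.trans one_le_two) hre.le) (sq_nonneg _)

-- The map `ζ ↦ b + p (1 - ζ) ^ γ` sends the disc into the sector, `0` to `b + p` and
-- `1 - t ^ γ⁻¹` to `b + t p`, so Schwarz–Pick compares the values of `ψ` at these two points.
theorem mul_rpow_inv_le_one_sub_norm_of_sector {γ : ℝ} (hγ0 : 0 < γ) (hγ1 : γ ≤ 1) {U : Set ℂ}
    {ψ : ℂ → ℂ} (hψ : DifferentiableOn ℂ ψ U) (hmaps : Set.MapsTo ψ U (ball 0 1)) {b p : ℂ}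
    (hp : p ≠ 0) (hU : ∀ v ≠ 0, ‖v‖ ≤ 2 * ‖p‖ → cos (γ * (π / 2)) * ‖p‖ * ‖v‖ ≤ ⟪p, v⟫ → b + v ∈ U)
    {ρ : ℝ} (hρ : ρ < 1) (hbp : ‖ψ (b + p)‖ ≤ ρ) {t : ℝ} (ht0 : 0 < t) (ht1 : t ≤ 1) :
    (1 - ρ) ^ 2 / 2 * t ^ γ⁻¹ ≤ 1 - ‖ψ (b + t * p)‖ := by
  set F : ℂ → ℂ := fun ζ ↦ ψ (b + p * (1 - ζ) ^ (γ : ℂ)) with hF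
  have hmem : Set.MapsTo (fun ζ ↦ b + p * (1 - ζ) ^ (γ : ℂ)) (ball 0 1) U :=
    fun ζ hζ ↦ add_mul_one_sub_cpow_mem hγ0.le hγ1 hp hU hζ
  have hFd : DifferentiableOn ℂ F (ball 0 1) := by
    refine hψ.comp (fun ζ hζ ↦ DifferentiableAt.differentiableWithinAt ?_) hmem
    exact ((((differentiableAt_const 1).sub differentiableAt_id).cpow_const
      (Or.inl (one_sub_re_pos_of_mem_ball hζ))).const_mul p).const_add b
  set x := t ^ γ⁻¹ with hx
  have hx0 : 0 < x := rpow_pos_of_pos ht0 _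
  have hx1 : x ≤ 1 := rpow_le_one ht0.le ht1 (inv_nonneg.2 hγ0.le)
  have hnorm : ‖(1 - x : ℂ)‖ = 1 - x := by
    rw [← Complex.ofReal_one, ← Complex.ofReal_sub, Complex.norm_of_nonneg (sub_nonneg.2 hx1)]
  have hFx : F (1 - x) = ψ (b + t * p) := by
    simp only [hF]
    rw [sub_sub_cancel, ← Complex.ofReal_cpow hx0.le, hx, rpow_inv_rpow ht0.le hγ0.ne', mul_comm p]
  have hpick := sq_one_sub_mul_one_sub_norm_le_one_sub_norm hFd (hmaps.comp hmem) hρ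
    (by simpa [hF] using hbp) (ζ := 1 - x) (by rw [mem_ball_zero_iff, hnorm]; linarith)
  rwa [hnorm, hFx, sub_sub_cancel] at hpick

end SectorDecay

section DistanceDecay

open scoped RealInnerProductSpace

theorem exists_lt_forall_le_of_le_infDist_compl {X : Type*} [PseudoMetricSpace X] [ProperSpace X]
    {Ω : Set X} (hΩ : Bornology.IsBounded Ω) {g : X → ℝ} (hg : ContinuousOn g Ω) {c : ℝ}
    (hgc : ∀ x ∈ Ω, g x < c) {δ : ℝ} (hδ : 0 < δ) :
    ∃ ρ < c, ∀ x ∈ Ω, δ ≤ infDist x Ωᶜ → g x ≤ ρ := by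
  have hK : IsCompact (closure Ω ∩ {x | δ ≤ infDist x Ωᶜ}) :=
    hΩ.isCompact_closure.inter_right (isClosed_le continuous_const (continuous_infDist_pt Ωᶜ))
  have hKΩ : closure Ω ∩ {x | δ ≤ infDist x Ωᶜ} ⊆ Ω := fun x hx ↦
    by_contra fun hxΩ ↦ hδ.not_ge (infDist_zero_of_mem (Set.mem_compl hxΩ) ▸ hx.2)
  obtain ⟨m, hm, hle⟩ := hK.exists_forall_le' (continuousOn_const.sub (hg.mono hKΩ))
    fun x hx ↦ sub_pos.2 (hgc x (hKΩ hx))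
  exact ⟨c - m, sub_lt_self c hm, fun x hx hδx ↦ le_sub_comm.1 (hle x ⟨subset_closure hx, hδx⟩)⟩

namespace TwoSidedConeCondition

variable {E : Type*} [NormedAddCommGroup E] [InnerProductSpace ℝ E] {κ h : ℝ} {Ω : Set E} {w b : E}
  (hcone : TwoSidedConeCondition κ h Ω) (hw : w ∈ Ω) (hb : b ∉ Ω) (hwb : dist w b = infDist w Ωᶜ)
include hcone hw hb hwb

theorem add_mem_of_smul {c : ℝ} (hc : 0 < c) {v : E} (hv : v ≠ 0) (hvh : ‖v‖ ≤ h)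
    (hvc : κ * ‖c • (w - b)‖ * ‖v‖ ≤ ⟪c • (w - b), v⟫) : b + v ∈ Ω := by
  refine (hcone w hw b hb hwb v hv hvh (le_of_mul_le_mul_left ?_ hc)).1
  rw [norm_smul, norm_of_nonneg hc.le, ← dist_eq_norm, real_inner_smul_left] at hvc
  linarith

theorem le_infDist_compl_add_smul (hκ : 0 ≤ κ) {s : ℝ} (hs : 0 < s)
    (hsh : 2 * s ≤ h) : s * (1 - κ) / 2 ≤ infDist (b + (s / dist w b) • (w - b)) Ωᶜ := by
  have hd : 0 < dist w b := dist_pos.2 (ne_of_mem_of_not_mem hw hb)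
  set p := (s / dist w b) • (w - b) with hp
  have hps : ‖p‖ = s := by
    rw [hp, norm_smul, ← dist_eq_norm, norm_of_nonneg (by positivity), div_mul_cancel₀ _ hd.ne']
  refine (le_infDist ⟨b, hb⟩).2 fun y hy ↦ le_of_not_gt fun hlt ↦ hy ?_
  set u := y - (b + p) with hu
  have hu_lt : ‖u‖ < s * (1 - κ) / 2 := by rwa [hu, ← dist_eq_norm, dist_comm]
  have hnorm_le : ‖p + u‖ ≤ s + ‖u‖ := hps ▸ norm_add_le p u
  have hnorm_ge : s ≤ ‖p + u‖ + ‖u‖ := hps ▸ norm_le_add_norm_add p u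
  have hinner : s * (s - ‖u‖) ≤ ⟪p, p + u⟫ := by
    rw [inner_add_right, real_inner_self_eq_norm_sq, hps]
    linarith [hps ▸ neg_le_of_abs_le (abs_real_inner_le_norm p u)]
  have hy_eq : y = b + (p + u) := by rw [hu]; abel
  have hκs : 0 ≤ s * κ := mul_nonneg hs.le hκ
  rw [hy_eq]
  refine hcone.add_mem_of_smul hw hb hwb (div_pos hs hd) (norm_pos_iff.1 ?_) (by linarith) ?_
  · linarith
  · rw [← hp, hps]
    refine le_trans ?_ hinner
    nlinarith

theorem notMem_of_mem_segment (hκ : κ ≤ 1) (hh : 0 ≤ h) {y : E}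
    (hy : y ∈ segment ℝ b (b - (h / dist w b) • (w - b))) : y ∉ Ω := by
  have hd : 0 < dist w b := dist_pos.2 (ne_of_mem_of_not_mem hw hb)
  rw [segment_eq_image'] at hy
  obtain ⟨t, ⟨ht0, ht1⟩, rfl⟩ := hy
  set v := (t * (h / dist w b)) • (w - b) with hv
  have hcoef : 0 ≤ t * (h / dist w b) := by positivity
  beta_reduce
  rw [sub_sub_cancel_left, smul_neg, ← sub_eq_add_neg, smul_smul, ← hv]
  rcases eq_or_ne v 0 with hv0 | hv0
  · rwa [hv0, sub_zero]
  have hnorm : ‖v‖ = t * h := by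
    rw [hv, norm_smul, norm_of_nonneg hcoef, ← dist_eq_norm]
    field_simp
  refine (hcone w hw b hb hwb v hv0 (hnorm ▸ mul_le_of_le_one_left hh ht1) ?_).2
  rw [hv, inner_smul_right, real_inner_self_eq_norm_sq, norm_smul, norm_of_nonneg hcoef,
    ← dist_eq_norm]
  nlinarith [mul_nonneg hcoef (sq_nonneg (dist w b))]

end TwoSidedConeCondition

theorem le_div_rpow_mul_rpow_of_mul_div_rpow_inv_le {A c d x γ : ℝ} (hA : 0 < A) (hc : 0 < c)
    (hd : 0 ≤ d) (hγ : 0 < γ) (h : c * (d / A) ^ γ⁻¹ ≤ x) : d ≤ A / c ^ γ * x ^ γ := by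
  have hpow : 0 ≤ c * (d / A) ^ γ⁻¹ := by positivity
  calc d = A / c ^ γ * (c * (d / A) ^ γ⁻¹) ^ γ := by
        rw [mul_rpow hc.le (by positivity), rpow_inv_rpow (by positivity) hγ.ne']
        field_simp
    _ ≤ A / c ^ γ * x ^ γ :=
      mul_le_mul_of_nonneg_left (rpow_le_rpow hpow h hγ.le) (by positivity)

end DistanceDecay

section BoundedDomains

variable {E : Type*} [NormedAddCommGroup E] [NormedSpace ℝ E] [Nontrivial E] {Ω : Set E}

theorem nonempty_compl_of_isBounded (hΩ : Bornology.IsBounded Ω) : Ωᶜ.Nonempty :=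
  Set.nonempty_compl.2 fun h ↦ NormedSpace.unbounded_univ ℝ E (h ▸ hΩ)

theorem exists_forall_infDist_compl_le (hΩ : Bornology.IsBounded Ω) :
    ∃ M, ∀ w ∈ Ω, infDist w Ωᶜ ≤ M := by
  obtain ⟨b, hb⟩ := nonempty_compl_of_isBounded hΩ
  obtain ⟨M, hM⟩ := hΩ.subset_closedBall b
  exact ⟨M, fun w hw ↦ (infDist_le_dist_of_mem hb).trans (hM hw)⟩

theorem exists_dist_eq_infDist_compl [ProperSpace E] (hΩ : IsOpen Ω)
    (hbdd : Bornology.IsBounded Ω) (w : E) : ∃ b ∉ Ω, dist w b = infDist w Ωᶜ := by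
  obtain ⟨b, hb, hwb⟩ :=
    hΩ.isClosed_compl.exists_infDist_eq_dist (nonempty_compl_of_isBounded hbdd) w
  exact ⟨b, hb, hwb.symm⟩

end BoundedDomains

section BoundaryGrowth

variable {γ h : ℝ} {Ω : Set ℂ}

theorem cos_mul_pi_div_two_nonneg (hγ0 : 0 ≤ γ) (hγ1 : γ ≤ 1) : 0 ≤ cos (γ * (π / 2)) :=
  cos_nonneg_of_neg_pi_div_two_le_of_le (by nlinarith [pi_pos]) (by nlinarith [pi_pos])

theorem TwoSidedConeCondition.mul_rpow_inv_le_one_sub_norm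
    (hcone : TwoSidedConeCondition (cos (γ * (π / 2))) h Ω) (hγ0 : 0 < γ) (hγ1 : γ ≤ 1)
    {ψ : ℂ → ℂ} (hψ : DifferentiableOn ℂ ψ Ω) (hmaps : Set.MapsTo ψ Ω (ball 0 1)) {s : ℝ}
    (hs : 0 < s) (hsh : 2 * s ≤ h) {ρ : ℝ} (hρ : ρ < 1)
    (hψρ : ∀ w ∈ Ω, s * (1 - cos (γ * (π / 2))) / 2 ≤ infDist w Ωᶜ → ‖ψ w‖ ≤ ρ)
    {w b : ℂ} (hw : w ∈ Ω) (hb : b ∉ Ω) (hwb : dist w b = infDist w Ωᶜ) (hws : dist w b ≤ s) :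
    (1 - ρ) ^ 2 / 2 * (dist w b / s) ^ γ⁻¹ ≤ 1 - ‖ψ w‖ := by
  have hd : 0 < dist w b := dist_pos.2 (ne_of_mem_of_not_mem hw hb)
  set p := (s / dist w b) • (w - b) with hp
  have hp0 : p ≠ 0 := smul_ne_zero (by positivity) (sub_ne_zero.2 (dist_pos.1 hd))
  have hps : ‖p‖ = s := by
    rw [hp, norm_smul, ← dist_eq_norm, norm_of_nonneg (by positivity), div_mul_cancel₀ _ hd.ne']
  have hsector : ∀ v ≠ 0, ‖v‖ ≤ 2 * ‖p‖ →
      cos (γ * (π / 2)) * ‖p‖ * ‖v‖ ≤ inner ℝ p v → b + v ∈ Ω := fun v hv hvp ↦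
    hcone.add_mem_of_smul hw hb hwb (div_pos hs hd) hv (hvp.trans (hps ▸ hsh))
  have hbp : b + p ∈ Ω := hsector p hp0 (by linarith [norm_nonneg p]) <| by
    rw [real_inner_self_eq_norm_sq]
    nlinarith [cos_le_one (γ * (π / 2)), sq_nonneg ‖p‖]
  have hwp : b + ((dist w b / s : ℝ) : ℂ) * p = w := by
    rw [hp, ← Complex.real_smul, smul_smul, div_mul_div_cancel₀ hs.ne', div_self hd.ne', one_smul,
      add_sub_cancel]
  have hdecay := mul_rpow_inv_le_one_sub_norm_of_sector hγ0 hγ1 hψ hmaps hp0 hsector hρ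
    (hψρ _ hbp (hcone.le_infDist_compl_add_smul hw hb hwb
      (cos_mul_pi_div_two_nonneg hγ0.le hγ1) hs hsh)) (div_pos hd hs) ((div_le_one hs).2 hws)
  rwa [hwp] at hdecay

theorem TwoSidedConeCondition.exists_infDist_compl_le_mul_rpow
    (hcone : TwoSidedConeCondition (cos (γ * (π / 2))) h Ω) (hh : 0 < h) (hγ0 : 0 < γ)
    (hγ1 : γ < 1) (hΩ : IsOpen Ω) (hbdd : Bornology.IsBounded Ω) {ψ : ℂ → ℂ}
    (hψ : DifferentiableOn ℂ ψ Ω) (hmaps : Set.MapsTo ψ Ω (ball 0 1)) :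
    ∃ D, ∀ w ∈ Ω, infDist w Ωᶜ ≤ D * (1 - ‖ψ w‖) ^ γ := by
  set δ := h / 2 * (1 - cos (γ * (π / 2))) / 2 with hδ
  have hcos : cos (γ * (π / 2)) < 1 := by
    rw [← cos_zero]
    exact cos_lt_cos_of_nonneg_of_le_pi le_rfl (by nlinarith [pi_pos]) (by positivity)
  have hδ0 : 0 < δ := by
    have := sub_pos.2 hcos
    positivity
  obtain ⟨ρ, hρ, hψρ⟩ := exists_lt_forall_le_of_le_infDist_compl hbdd hψ.continuousOn.norm
    (fun w hw ↦ mem_ball_zero_iff.1 (hmaps hw)) hδ0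
  obtain ⟨M, hM⟩ := exists_forall_infDist_compl_le hbdd
  have hA : 0 < max (h / 2) M := lt_max_of_lt_left (half_pos hh)
  have hc : 0 < (1 - ρ) ^ 2 / 2 := half_pos (pow_pos (sub_pos.2 hρ) 2)
  refine ⟨_, fun w hw ↦ le_div_rpow_mul_rpow_of_mul_div_rpow_inv_le hA hc infDist_nonneg hγ0 ?_⟩
  obtain ⟨b, hb, hwb⟩ := exists_dist_eq_infDist_compl hΩ hbdd w
  rcases le_total (dist w b) (h / 2) with hnear | hfar
  · rw [← hwb]
    refine le_trans ?_ (hcone.mul_rpow_inv_le_one_sub_norm hγ0 hγ1.le hψ hmaps (half_pos hh)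
      (by linarith) hρ hψρ hw hb hwb hnear)
    gcongr
    exact le_max_left _ _
  · have hψw : ‖ψ w‖ ≤ ρ := hψρ w hw (by
      rw [← hwb]
      nlinarith [cos_mul_pi_div_two_nonneg hγ0.le hγ1.le])
    have hpow : (infDist w Ωᶜ / max (h / 2) M) ^ γ⁻¹ ≤ 1 :=
      rpow_le_one (div_nonneg infDist_nonneg hA.le)
        ((div_le_one hA).2 (le_max_of_le_right (hM w hw))) (inv_nonneg.2 hγ0.le)
    calc (1 - ρ) ^ 2 / 2 * (infDist w Ωᶜ / max (h / 2) M) ^ γ⁻¹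
        ≤ (1 - ρ) ^ 2 / 2 := mul_le_of_le_one_right hc.le hpow
      _ ≤ 1 - ‖ψ w‖ := by nlinarith [norm_nonneg (ψ w)]

theorem TwoSidedConeCondition.norm_deriv_mul_le {κ : ℝ} (hcone : TwoSidedConeCondition κ h Ω)
    (hκ : κ ≤ 1) (hh : 0 < h) {R : ℝ} (hR : 0 < R) {φ : ℂ → ℂ} {z : ℂ}
    (hφ : DifferentiableOn ℂ φ (ball z R)) (hmaps : Set.MapsTo φ (ball z R) Ω) {b : ℂ}
    (hb : b ∉ Ω) (hzb : dist (φ z) b = infDist (φ z) Ωᶜ) :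
    ‖deriv φ z‖ * R * h ≤ 4 * (dist (φ z) b * (dist (φ z) b + h)) := by
  have hφz : φ z ∈ Ω := hmaps (mem_ball_self hR)
  have hd : 0 < dist (φ z) b := dist_pos.2 (ne_of_mem_of_not_mem hφz hb)
  set b' := b - (h / dist (φ z) b) • (φ z - b) with hb'
  have homit : ∀ ζ ∈ ball z R, φ ζ ∉ segment ℝ b b' := fun ζ hζ hmem ↦
    hcone.notMem_of_mem_segment hφz hb hzb hκ hh.le hmem (hmaps hζ)
  have hbb' : ‖b - b'‖ = h := by
    rw [hb', sub_sub_cancel, norm_smul, ← dist_eq_norm, norm_of_nonneg (by positivity),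
      div_mul_cancel₀ _ hd.ne']
  have hzb' : ‖φ z - b'‖ ≤ dist (φ z) b + h := by
    rw [← sub_add_sub_cancel (φ z) b b', dist_eq_norm]
    exact (norm_add_le _ _).trans_eq (by rw [hbb'])
  calc ‖deriv φ z‖ * R * h = ‖deriv φ z‖ * R * ‖b - b'‖ := by rw [hbb']
    _ ≤ 4 * (‖φ z - b‖ * ‖φ z - b'‖) := norm_deriv_mul_le_of_disjoint_segment hR hφ homit
    _ ≤ 4 * (dist (φ z) b * (dist (φ z) b + h)) := by
      rw [← dist_eq_norm]
      gcongr

end BoundaryGrowth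

section DilatationFinite

variable {γ : ℝ} {Ω : Set ℂ} {φ : ℂ → ℂ}

theorem exists_norm_deriv_le_mul_one_sub_norm_rpow {h : ℝ}
    (hcone : TwoSidedConeCondition (cos (γ * (π / 2))) h Ω) (hh : 0 < h) (hγ0 : 0 < γ)
    (hγ1 : γ < 1) (hbdd : Bornology.IsBounded Ω) (hφ : DifferentiableOn ℂ φ (ball 0 1))
    (hinj : (ball 0 1).InjOn φ) (hΩ : φ '' ball 0 1 = Ω) :
    ∃ C, ∀ z ∈ ball (0 : ℂ) 1, ‖deriv φ z‖ ≤ C * (1 - ‖z‖) ^ (γ - 1) := by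
  subst hΩ
  have hopen := isOpen_image_of_injOn isOpen_ball hφ hinj
  set ψ := Function.invFunOn φ (ball 0 1)
  have hψ : Set.LeftInvOn ψ φ (ball 0 1) := hinj.leftInvOn_invFunOn
  have hψmaps : Set.MapsTo ψ (φ '' ball 0 1) (ball 0 1) :=
    Set.mapsTo_image_iff.2 fun z hz ↦ by rwa [Function.comp_apply, hψ hz]
  obtain ⟨D, hD⟩ := hcone.exists_infDist_compl_le_mul_rpow hh hγ0 hγ1 hopen hbdd
    (differentiableOn_image_of_leftInvOn isOpen_ball hφ hψ) hψmaps
  refine ⟨4 * D * (D + h) / h, fun z hz ↦ ?_⟩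
  have hz1 : 0 < 1 - ‖z‖ := sub_pos.2 (mem_ball_zero_iff.1 hz)
  obtain ⟨b, hb, hzb⟩ := exists_dist_eq_infDist_compl hopen hbdd (φ z)
  have hsub : ball z (1 - ‖z‖) ⊆ ball 0 1 := ball_subset_ball' (by simp)
  have hderiv := hcone.norm_deriv_mul_le (cos_le_one _) hh hz1 (hφ.mono hsub)
    ((Set.mapsTo_image φ (ball 0 1)).mono_left hsub) hb hzb
  have hdist : dist (φ z) b ≤ D * (1 - ‖z‖) ^ γ := by
    simpa only [hzb, hψ hz] using hD (φ z) (Set.mem_image_of_mem φ hz)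
  have hpow : 0 < (1 - ‖z‖) ^ γ := rpow_pos_of_pos hz1 γ
  have hD0 : 0 ≤ D := nonneg_of_mul_nonneg_left (dist_nonneg.trans hdist) hpow
  have hdistD : dist (φ z) b ≤ D := hdist.trans
    (mul_le_of_le_one_right hD0 (rpow_le_one hz1.le (sub_le_self 1 (norm_nonneg z)) hγ0.le))
  rw [rpow_sub_one hz1.ne', ← mul_div_assoc, le_div_iff₀ hz1, div_mul_eq_mul_div, le_div_iff₀ hh]
  calc ‖deriv φ z‖ * (1 - ‖z‖) * h ≤ 4 * (dist (φ z) b * (dist (φ z) b + h)) := hderiv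
    _ ≤ 4 * (D * (1 - ‖z‖) ^ γ * (D + h)) := by gcongr
    _ = 4 * D * (D + h) * (1 - ‖z‖) ^ γ := by ring

theorem setLIntegral_Ioo_one_sub_rpow {p : ℝ} (hp : -1 < p) :
    ∫⁻ r in Set.Ioo (0 : ℝ) 1, ENNReal.ofReal ((1 - r) ^ p) = ENNReal.ofReal (p + 1)⁻¹ := by
  have hpre : (fun r : ℝ ↦ 1 - r) ⁻¹' Set.Ioo 0 1 = Set.Ioo 0 1 := by
    rw [Set.preimage_const_sub_Ioo, sub_self, sub_zero]
  have hsymm := (volume.measurePreserving_sub_left (1 : ℝ)).setLIntegral_comp_preimage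
    (s := Set.Ioo 0 1) measurableSet_Ioo (f := fun r ↦ ENNReal.ofReal (r ^ p)) (by fun_prop)
  rw [hpre] at hsymm
  rw [hsymm, setLIntegral_Ioo_rpow hp]

theorem setLIntegral_ball_one_sub_norm_rpow_lt_top {E : Type*} [NormedAddCommGroup E]
    [NormedSpace ℝ E] [MeasurableSpace E] [BorelSpace E] [FiniteDimensional ℝ E] [Nontrivial E]
    (μ : Measure E) [μ.IsAddHaarMeasure] {p : ℝ} (hp : -1 < p) :
    ∫⁻ x in ball (0 : E) 1, ENNReal.ofReal ((1 - ‖x‖) ^ p) ∂μ < ∞ := by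
  rw [setLIntegral_ball_fun_norm_addHaar μ (f := fun r ↦ ENNReal.ofReal ((1 - r) ^ p))
    (by fun_prop)]
  refine ENNReal.mul_lt_top
    (ENNReal.mul_lt_top (ENNReal.natCast_lt_top _) measure_ball_lt_top) (lt_of_le_of_lt ?_
      ((setLIntegral_Ioo_one_sub_rpow hp).trans_lt ENNReal.ofReal_lt_top))
  refine setLIntegral_mono' measurableSet_Ioo fun r hr ↦ mul_le_of_le_one_left' ?_
  exact ENNReal.ofReal_le_one.2 (pow_le_one₀ hr.1.le hr.2.le)

theorem conformalDilatation_lt_top_of_norm_deriv_le {α C : ℝ} (hα : 0 ≤ α)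
    (hC : ∀ z ∈ ball (0 : ℂ) 1, ‖deriv φ z‖ ≤ C * (1 - ‖z‖) ^ (γ - 1))
    (hγ : -1 < (γ - 1) * α) : conformalDilatation α φ < ∞ := by
  have hC0 : 0 ≤ C := by simpa using (norm_nonneg _).trans (hC 0 (mem_ball_self one_pos))
  calc conformalDilatation α φ
      ≤ ∫⁻ z in ball (0 : ℂ) 1,
          ENNReal.ofReal (C ^ α) * ENNReal.ofReal ((1 - ‖z‖) ^ ((γ - 1) * α)) := by
        refine setLIntegral_mono' measurableSet_ball fun z hz ↦ ?_
        have hz1 : 0 ≤ 1 - ‖z‖ := sub_nonneg.2 (mem_ball_zero_iff.1 hz).le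
        rw [← ofReal_norm, ENNReal.ofReal_rpow_of_nonneg (norm_nonneg _) hα,
          ← ENNReal.ofReal_mul (rpow_nonneg hC0 α), rpow_mul hz1,
          ← mul_rpow hC0 (rpow_nonneg hz1 _)]
        exact ENNReal.ofReal_le_ofReal (rpow_le_rpow (norm_nonneg _) (hC z hz) hα)
    _ < ∞ := by
        rw [lintegral_const_mul' _ _ ENNReal.ofReal_ne_top]
        exact ENNReal.mul_lt_top ENNReal.ofReal_lt_top
          (setLIntegral_ball_one_sub_norm_rpow_lt_top volume hγ)

theorem IsC1DefiningFunction.conformalDilatation_lt_top {r : ℂ → ℝ}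
    (hr : IsC1DefiningFunction r Ω) (hbdd : Bornology.IsBounded Ω)
    (hφ : DifferentiableOn ℂ φ (ball 0 1)) (hinj : (ball 0 1).InjOn φ) (hΩ : φ '' ball 0 1 = Ω)
    {α : ℝ} (hα : 0 ≤ α) : conformalDilatation α φ < ∞ := by
  have hγ0 : 0 < 1 - (α + 2)⁻¹ := sub_pos.2 (inv_lt_one_of_one_lt₀ (by linarith))
  have hγ1 : 1 - (α + 2)⁻¹ < 1 := sub_lt_self 1 (by positivity)
  obtain ⟨h, hh, hcone⟩ := hr.exists_twoSidedConeCondition hbdd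
    (κ := cos ((1 - (α + 2)⁻¹) * (π / 2)))
    (cos_pos_of_mem_Ioo ⟨by nlinarith [pi_pos], by nlinarith [pi_pos]⟩)
  obtain ⟨C, hC⟩ :=
    exists_norm_deriv_le_mul_one_sub_norm_rpow hcone hh hγ0 hγ1 hbdd hφ hinj hΩ
  refine conformalDilatation_lt_top_of_norm_deriv_le hα hC ?_
  field_simp
  linarith

end DilatationFinite

theorem poincare_inequality_quasidisc_dilatation_general {r : ℂ → ℝ} {Ω : Set ℂ}
    (hr : IsC1DefiningFunction r Ω) (hbdd : Bornology.IsBounded Ω) {φ : ℂ → ℂ}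
    (hφ : DifferentiableOn ℂ φ (ball 0 1)) (hinj : (ball 0 1).InjOn φ) (hΩ : φ '' ball 0 1 = Ω)
    {α : ℝ} (hα : 2 < α) {f : ℂ → ℝ} (hf : ContDiffOn ℝ 1 f Ω)
    (hf' : IntegrableOn (fun z ↦ ‖fderiv ℝ f z‖ ^ 2) Ω) :
    MemLp f 2 (volume.restrict Ω) ∧
      ∫ z in Ω, (f z - ⨍ w in Ω, f w) ^ 2
        ≤ 4 / π ^ (2 / α) * ((2 * α - 2) / (α - 2)) ^ ((2 * α - 2) / α) *
          (∫⁻ z in ball (0 : ℂ) 1, ‖deriv φ z‖ₑ ^ α).toReal ^ (2 / α) *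
          ∫ z in Ω, ‖fderiv ℝ f z‖ ^ 2 := by
  have hQ := hr.conformalDilatation_lt_top hbdd hφ hinj hΩ (zero_le_two.trans hα.le)
  subst hΩ
  exact memLp_two_and_integral_sq_sub_average_le_of_conformalDilatation hφ hinj hα hQ.ne
    (isOpen_image_of_injOn isOpen_ball hφ hinj) hf hf'

/-- Rayleigh-quotient form of the bound
`1/μ₁(Ω) ≤ (4/π^{2/α})((2α−2)/(α−2))^{(2α−2)/α} Q(α,Ω)^{2/α}` on a `C¹`
`K`-quasidisc `Ω`, where `Q(α,Ω) = ∬_𝔻 |φ′|^α dxdy` is the hyperbolic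
`α`-dilatation computed from a conformal map `φ : 𝔻 → Ω`. -/
theorem poincare_inequality_quasidisc_dilatation
    (K : ℝ) (hK : 1 ≤ K) (Φ : ℂ → ℂ) (hΦ : IsC1QCPlane K Φ)
    (Ω : Set ℂ) (hΩ : Ω = Φ '' Metric.ball 0 1)
    (φ : ℂ → ℂ) (hφd : DifferentiableOn ℂ φ (Metric.ball 0 1))
    (hφi : Set.InjOn φ (Metric.ball 0 1)) (hφim : φ '' Metric.ball 0 1 = Ω)
    (α : ℝ) (hα : 2 < α) (hαK : α * (K ^ 2 - 1) < 2 * K ^ 2)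
    (f : ℂ → ℝ) (hf : ContDiffOn ℝ 1 f Ω)
    (hf2 : IntegrableOn (fun z => (f z) ^ 2) Ω)
    (hg2 : IntegrableOn (fun z => ‖fderiv ℝ f z‖ ^ 2) Ω) :
    ∫ z in Ω, (f z - ⨍ w in Ω, f w) ^ 2
      ≤ (4 / π ^ (2 / α)) * ((2 * α - 2) / (α - 2)) ^ ((2 * α - 2) / α) *
          ((∫⁻ z in Metric.ball (0 : ℂ) 1, (‖deriv φ z‖₊ : ℝ≥0∞) ^ α).toReal) ^ (2 / α) *
          ∫ z in Ω, ‖fderiv ℝ f z‖ ^ 2 := by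
  obtain ⟨r, hr⟩ := exists_isC1DefiningFunction_image_ball hΦ.1 hΦ.2.1 fun z ↦ (hΦ.2.2 z).1.ne'
  subst hΩ
  exact (poincare_inequality_quasidisc_dilatation_general hr
    (isBounded_image_ball_of_continuous hΦ.1.continuous 0 1) hφd hφi hφim hα hf hg2).2
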